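/- Let d ≥ 5, n ≥ 4 and a, b > 1, and let E_0, E_1 be (a,b) separated DOT clusterings of n-element configurations in Z^d. There is a number c = c(b,d,n) > 0 such that if a ≥ e^{max{100b, 10d²}}, then P_{E_0}(C_1 = E_1) ≥ (1 − c·a^{2.1−d})·Q_{E_0}(D_1 = E_1). -/

import Mathlib

open MeasureTheory

namespace HATFormal

/-- Points of the lattice `ℤ^d`. -/
abbrev Pt (d : ℕ) := Fin d → ℤ

/-- The `2d` unit steps of the simple random walk on `ℤ^d`. -/
def Dir (d : ℕ) : Set (Pt d) :=
  {s | ∃ i : Fin d, s = Pi.single i 1 ∨ s = Pi.single i (-1)}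

/-- The position, after `t` steps, of the walk started at `x` with steps `s`. -/
def wpos (d : ℕ) (x : Pt d) {T : ℕ} (s : Fin T → Pt d) (t : ℕ) : Pt d :=
  x + ∑ i ∈ Finset.univ.filter (fun i : Fin T => (i : ℕ) < t), s i

/-- The probability of an event `P` of the first `T` steps of simple random walk on `ℤ^d`. -/
noncomputable def prob (d T : ℕ) (P : (Fin T → Pt d) → Prop) : ℝ :=
  (Nat.card {s : Fin T → Pt d // (∀ i, s i ∈ Dir d) ∧ P s} : ℝ) / ((2 * d : ℕ) : ℝ) ^ T

open Classical in
/-- `esc d A x = P_x(τ_A = ∞)` if `x ∈ A`, and `0` otherwise. -/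
noncomputable def esc (d : ℕ) (A : Set (Pt d)) (x : Pt d) : ℝ :=
  if x ∈ A then ⨅ T : ℕ, prob d T (fun s => ∀ t, 1 ≤ t → t ≤ T → wpos d x s t ∉ A) else 0

/-- The capacity of `A`. -/
noncomputable def capa (d : ℕ) (A : Set (Pt d)) : ℝ := ∑' x : A, esc d A (x : Pt d)

/-- The harmonic measure `H_A(x) = esc_A(x) / cap_A`. -/
noncomputable def harm (d : ℕ) (A : Set (Pt d)) (x : Pt d) : ℝ := esc d A x / capa d A

/-- `P_x(τ_W < ∞)`. -/
noncomputable def retProb (d : ℕ) (W : Set (Pt d)) (x : Pt d) : ℝ :=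
  ∑' t : ℕ, prob d t (fun s => 1 ≤ t ∧ wpos d x s t ∈ W ∧
    ∀ u, 1 ≤ u → u < t → wpos d x s u ∉ W)

/-- `P_x(τ_W < ∞ and S_{τ_W − 1} = y)`. -/
noncomputable def hitFrom (d : ℕ) (W : Set (Pt d)) (x y : Pt d) : ℝ :=
  ∑' t : ℕ, prob d t (fun s => 1 ≤ t ∧ wpos d x s t ∈ W ∧ wpos d x s (t - 1) = y ∧
    ∀ u, 1 ≤ u → u < t → wpos d x s u ∉ W)

/-- `P_x(τ_W < ∞ and S_{τ_W} ∈ T)`. -/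
noncomputable def firstHitIn (d : ℕ) (W T : Set (Pt d)) (x : Pt d) : ℝ :=
  ∑' t : ℕ, prob d t (fun s => 1 ≤ t ∧ wpos d x s t ∈ W ∧ wpos d x s t ∈ T ∧
    ∀ u, 1 ≤ u → u < t → wpos d x s u ∉ W)

/-- `P_x(S_{τ_W − 1} = y ∣ τ_W < ∞)`. -/
noncomputable def transP (d : ℕ) (W : Set (Pt d)) (x y : Pt d) : ℝ :=
  hitFrom d W x y / retProb d W x

/-- The Green's function of simple random walk on `ℤ^d`. -/
noncomputable def green (d : ℕ) (x : Pt d) : ℝ :=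
  ∑' t : ℕ, prob d t (fun s => wpos d x s t = 0)

/-- Configurations: finite subsets of `ℤ^d`. -/
abbrev Conf (d : ℕ) := Finset (Pt d)

/-- `p_U(x, y)`, the probability that HAT activates at `x` and transports to `y`. -/
noncomputable def pHAT (d : ℕ) (U : Conf d) (x y : Pt d) : ℝ :=
  harm d (↑U) x * transP d ((↑U : Set (Pt d)) \ {x}) x y

open Classical in
/-- The transition probabilities of HAT. -/
noncomputable def hatProb (d : ℕ) (U V : Conf d) : ℝ :=
  if V = U then ∑' z : Pt d, pHAT d U z z
  else ∑' x : Pt d, ∑' y : Pt d,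
    if x ∈ U ∧ x ≠ y ∧ V = insert y (U.erase x) then pHAT d U x y else 0

instance (d : ℕ) : MeasurableSpace (Conf d) := ⊤

/-- `μ` is the law of HAT started from `U`. -/
def IsHATLaw (d : ℕ) (U : Conf d) (μ : Measure (ℕ → Conf d)) : Prop :=
  IsProbabilityMeasure μ ∧
  ∀ (t : ℕ) (u : ℕ → Conf d),
    μ {ω | ∀ s ≤ t, ω s = u s} =
      (if u 0 = U then 1 else 0) *
        ∏ s ∈ Finset.range t, ENNReal.ofReal (hatProb d (u s) (u (s + 1)))

/-- A signed permutation plus translation of `ℤ^d`. -/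
def SymImage (d : ℕ) (σ : Equiv.Perm (Fin d)) (ε : Fin d → ℤ) (v : Pt d) (x : Pt d) : Pt d :=
  fun i => v i + ε i * x (σ i)

/-- `SymEq d U V` holds when `V = gU` for a symmetry `g` of `ℤ^d`. -/
def SymEq (d : ℕ) (U V : Conf d) : Prop :=
  ∃ (σ : Equiv.Perm (Fin d)) (ε : Fin d → ℤ) (v : Pt d),
    (∀ i, ε i = 1 ∨ ε i = -1) ∧ V = U.image (SymImage d σ ε v)

/-- Euclidean distance on `ℤ^d`. -/
noncomputable def dist0 (d : ℕ) (x y : Pt d) : ℝ :=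
  Real.sqrt (∑ i, ((x i : ℝ) - (y i : ℝ)) ^ 2)

/-- Euclidean distance between finite subsets of `ℤ^d`. -/
noncomputable def setDist (d : ℕ) (A B : Finset (Pt d)) : ℝ :=
  sInf {r : ℝ | ∃ x ∈ A, ∃ y ∈ B, r = dist0 d x y}

/-- Euclidean diameter of a finite subset of `ℤ^d`. -/
noncomputable def diam0 (d : ℕ) (A : Finset (Pt d)) : ℝ :=
  sSup {r : ℝ | ∃ x ∈ A, ∃ y ∈ A, r = dist0 d x y}

/-- Lattice (nearest-neighbor) adjacency in `ℤ^d`. -/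
def latAdj (d : ℕ) (x y : Pt d) : Prop := (∑ i, (x i - y i).natAbs) = 1

/-- Exterior lattice boundary of a set. -/
def bdry (d : ℕ) (A : Set (Pt d)) : Set (Pt d) := {z | z ∉ A ∧ ∃ w ∈ A, latAdj d z w}

/-- Non-isolated configurations: some exposed element has a lattice neighbor in the set. -/
def NonIso (d : ℕ) (U : Conf d) : Prop :=
  ∃ x ∈ U, 0 < esc d (↑U) x ∧ ∃ y ∈ U, latAdj d x y

/-- `C` is a clustering (ordered partition into nonempty clusters) of `U`. -/
def IsClusteringOf (d : ℕ) {k : ℕ} (C : Fin k → Finset (Pt d)) (U : Finset (Pt d)) : Prop :=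
  (∀ i, (C i).Nonempty) ∧ (∀ i j, i ≠ j → Disjoint (C i) (C j)) ∧
    Finset.univ.biUnion C = U

/-- `C^{≠ i}`, the union of the clusters other than `i`. -/
def others (d : ℕ) {k : ℕ} (C : Fin k → Finset (Pt d)) (i : Fin k) : Finset (Pt d) :=
  Finset.univ.biUnion fun j => if j = i then ∅ else C j

/-- The separation of a clustering. -/
noncomputable def sep (d : ℕ) {k : ℕ} (C : Fin k → Finset (Pt d)) : ℝ :=
  ⨅ i, setDist d (C i) (others d C i)

/-- `(a, b)` separated dimer-or-trimer (DOT) clusterings. -/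
def IsDOT (d : ℕ) {k : ℕ} (C : Fin k → Finset (Pt d)) (a b : ℝ) : Prop :=
  (∀ i, (C i).card = 2 ∨ (C i).card = 3) ∧ a ≤ sep d C ∧
    ∀ i, diam0 d (C i) ≤ b * Real.log (setDist d (C i) (others d C i))

/-- Clusterings with an unspecified number of clusters. -/
abbrev ClusteringS (d : ℕ) := Σ k : ℕ, Fin k → Finset (Pt d)

/-- `π(C)`, the union of the clusters of `C`. -/
def confOf (d : ℕ) (C : ClusteringS d) : Conf d := Finset.univ.biUnion C.2

/-- `C ∈ 𝒞(U, a, b)`. -/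
def InC (d : ℕ) (U : Conf d) (a b : ℝ) (C : ClusteringS d) : Prop :=
  IsClusteringOf d C.2 U ∧ IsDOT d C.2 a b

/-- `U ∈ 𝒰_{d,n}(a, b)`. -/
def InU (d n : ℕ) (a b : ℝ) (U : Conf d) : Prop :=
  U.card = n ∧ ∃ C : ClusteringS d, InC d U a b C

/-- `C` is a clustering of an `n`-element configuration. -/
def IsClusteringConf (d n : ℕ) (C : ClusteringS d) : Prop :=
  (∀ i, (C.2 i).Nonempty) ∧ (∀ i j, i ≠ j → Disjoint (C.2 i) (C.2 j)) ∧
    (confOf d C).card = n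

open Classical in
/-- One step of the natural clustering. -/
noncomputable def clustStep (d : ℕ) (Ut Ut1 : Conf d) (C : ClusteringS d) : ClusteringS d :=
  if Ut1 = Ut then C
  else if h : ∃ p : Pt d × Pt d × Fin C.1,
      Ut \ Ut1 = {p.1} ∧ Ut1 \ Ut = {p.2.1} ∧ p.1 ∈ C.2 p.2.2 then
    ⟨C.1, Function.update C.2 h.choose.2.2
      (insert h.choose.2.1 ((C.2 h.choose.2.2).erase h.choose.1))⟩
  else ⟨1, fun _ => Ut1⟩

/-- The natural clustering of the trajectory `ω` with initial clustering `C0`. -/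
noncomputable def natClust (d : ℕ) (ω : ℕ → Conf d) (C0 : ClusteringS d) : ℕ → ClusteringS d
  | 0 => C0
  | t + 1 => clustStep d (ω t) (ω (t + 1)) (natClust d ω C0 t)

/-- `a_s = s^{1/2 − n^{−100}} + 100 n`. -/
noncomputable def aSep (n s : ℕ) : ℝ :=
  (s : ℝ) ^ ((1 : ℝ) / 2 - (n : ℝ) ^ (-(100 : ℝ))) + 100 * n

/-- `C^{i, x, y}`: remove `x` from cluster `i` of `C` and add `y` to that cluster. -/
def updC (d : ℕ) (C : ClusteringS d) (i : Fin C.1) (x y : Pt d) : ClusteringS d :=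
  ⟨C.1, Function.update C.2 i (insert y ((C.2 i).erase x))⟩

open Classical in
/-- The transition probabilities of the lifting of HAT to clusterings. -/
noncomputable def liftProb (d : ℕ) (E0 E1 : ClusteringS d) : ℝ :=
  ∑' x : Pt d, ∑' y : Pt d,
    if ∃ i : Fin E0.1, x ∈ E0.2 i ∧ E1 = updC d E0 i x y
    then pHAT d (confOf d E0) x y else 0

/-- The capacity of a clustering: the sum of the capacities of its clusters. -/
noncomputable def capS (d : ℕ) (C : ClusteringS d) : ℝ := ∑ i, capa d (↑(C.2 i))

/-- `H_C(i, x) = esc_{C^i}(x) / cap_C`. -/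
noncomputable def harmS (d : ℕ) (C : ClusteringS d) (i : Fin C.1) (x : Pt d) : ℝ :=
  esc d (↑(C.2 i)) x / capS d C

/-- `q_C(i, x, y)`. -/
noncomputable def qIHAT (d : ℕ) (C : ClusteringS d) (i : Fin C.1) (x y : Pt d) : ℝ :=
  harmS d C i x * transP d ((↑(C.2 i) : Set (Pt d)) \ {x}) x y

open Classical in
/-- The transition probabilities of intracluster HAT (IHAT). -/
noncomputable def ihatProb (d : ℕ) (D E : ClusteringS d) : ℝ :=
  ∑' x : Pt d, ∑' y : Pt d, ∑ i : Fin D.1,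
    if x ∈ D.2 i ∧ E = updC d D i x y then qIHAT d D i x y else 0

instance (d : ℕ) : MeasurableSpace (ClusteringS d) := ⊤

open Classical in
/-- `μ` is the law of the lifted HAT chain started from `E0`. -/
def IsLiftLaw (d : ℕ) (E0 : ClusteringS d) (μ : Measure (ℕ → ClusteringS d)) : Prop :=
  IsProbabilityMeasure μ ∧
  ∀ (t : ℕ) (u : ℕ → ClusteringS d),
    μ {ω | ∀ s ≤ t, ω s = u s} =
      (if u 0 = E0 then 1 else 0) *
        ∏ s ∈ Finset.range t, ENNReal.ofReal (liftProb d (u s) (u (s + 1)))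

open Classical in
/-- `μ` is the law of intracluster HAT started from `D0`. -/
def IsIHATLaw (d : ℕ) (D0 : ClusteringS d) (μ : Measure (ℕ → ClusteringS d)) : Prop :=
  IsProbabilityMeasure μ ∧
  ∀ (t : ℕ) (u : ℕ → ClusteringS d),
    μ {ω | ∀ s ≤ t, ω s = u s} =
      (if u 0 = D0 then 1 else 0) *
        ∏ s ∈ Finset.range t, ENNReal.ofReal (ihatProb d (u s) (u (s + 1)))

/-- `Pairs(E0, E1)`. -/
def Pairs (d : ℕ) (E0 E1 : ClusteringS d) : Set (Pt d × Pt d) :=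
  {p | 0 < pHAT d (confOf d E0) p.1 p.2 ∧
    ∃ i : Fin E0.1, p.1 ∈ E0.2 i ∧ E1 = updC d E0 i p.1 p.2}

/-- `Triples(E0, E1)`. -/
def Triples (d : ℕ) (E0 E1 : ClusteringS d) : Set (Fin E0.1 × Pt d × Pt d) :=
  {q | 0 < qIHAT d E0 q.1 q.2.1 q.2.2 ∧ E1 = updC d E0 q.1 q.2.1 q.2.2}

/-- The first standard basis vector of `ℤ^d`. -/
def e1v (d : ℕ) : Pt d := fun i => if (i : ℕ) = 0 then 1 else 0

/-- Reference dimers and trimers. -/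
def Ref (d : ℕ) : Set (Finset (Pt d)) :=
  {A | ∃ x : Pt d, A = {x, x + e1v d} ∨ A = {x, x + e1v d, x + e1v d + e1v d}}

/-- *-adjacency in `ℤ^d`: distinct points differing by at most one in each coordinate. -/
def starAdj (d : ℕ) (x y : Pt d) : Prop := x ≠ y ∧ ∀ i, (x i - y i).natAbs ≤ 1

/-- The *-visible boundary of `A`. -/
def visBdry (d : ℕ) (A : Finset (Pt d)) : Set (Pt d) :=
  {x | (∃ y ∈ A, starAdj d x y) ∧
    ∃ γ : ℕ → Pt d, γ 0 = x ∧ (∀ t, latAdj d (γ t) (γ (t + 1))) ∧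
      (∀ t, γ t ∉ A) ∧ ∀ r : ℝ, ∃ t, r < dist0 d (γ t) 0}

/-- `A` is connected in the nearest-neighbor graph of `ℤ^d`. -/
def LatConnected (d : ℕ) (A : Finset (Pt d)) : Prop :=
  ∀ x ∈ A, ∀ y ∈ A, ∃ (L : ℕ) (γ : ℕ → Pt d), γ 0 = x ∧ γ L = y ∧
    (∀ t < L, latAdj d (γ t) (γ (t + 1))) ∧ ∀ t ≤ L, γ t ∈ A

/-- Strict lexicographic order on `ℤ^d`. -/
def lexLt (d : ℕ) (x y : Pt d) : Prop :=
  ∃ i : Fin d, (∀ j, j < i → x j = y j) ∧ x i < y i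

/-- `x` is the lex (least) element of `A`. -/
def IsLex (d : ℕ) (A : Finset (Pt d)) (x : Pt d) : Prop :=
  x ∈ A ∧ ∀ y ∈ A, y ≠ x → lexLt d x y

/-!
Newton's potential, shifted to `(|z|² + M) ^ (-(d - 2) / 2)`, is superharmonic for the walk on `ℤ^d`
if `M` is large, and subharmonic away from the origin if `-M` is large: the leading terms of its
discrete Laplacian cancel, and the next one has the sign of `-M`. A hitting probability is the
least nonnegative solution of its first-step equation, so the superharmonic kernel shows that a walk
crosses the distance `r` between two clusters with probability `O(r ^ (2 - d))`. The subharmonic one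
gives, by the maximum principle, a polynomial Harnack inequality in the complement of fewer than
`2 d` points. As the diameter of a cluster is only logarithmic in `r`, every possible transport
inside it then has probability at least `c r ^ (-δ)`, for any `δ > 0`.

Adding the other clusters to the obstacle therefore lowers the harmonic measure of a point by a
relative error `O(r ^ (2 - d))`, and the conditional probability of a transport by
`O(r ^ (2 + δ - d))`. The exponent `2.1 - d` is the case `δ = 0.1`.
-/

section Steps

variable {d : ℕ}

/-- The `2d` unit steps of the walk, indexed by a coordinate and a sign (`true` for `+`). -/
def step (q : Fin d × Bool) : Pt d := Pi.single q.1 (if q.2 then 1 else -1)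

lemma step_injective : Function.Injective (step (d := d)) := by
  rintro ⟨i, b⟩ ⟨j, c⟩ h
  have hij : i = j := by
    by_contra hne
    have hi := congrFun h i
    cases b <;> simp [step, Pi.single_eq_of_ne hne] at hi
  subst hij
  have hsign := Pi.single_injective i h
  cases b <;> cases c <;> simp_all

lemma mem_Dir_iff_exists_step {s : Pt d} : s ∈ Dir d ↔ ∃ q, s = step q := by
  simp [Dir, step, or_comm]

lemma finite_steps_in_Dir (T : ℕ) (P : (Fin T → Pt d) → Prop) :
    Finite {s : Fin T → Pt d // (∀ i, s i ∈ Dir d) ∧ P s} := by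
  have hDir : (Dir d).Finite := (Set.finite_range step).subset fun s hs => by
    obtain ⟨q, rfl⟩ := mem_Dir_iff_exists_step.1 hs
    exact Set.mem_range_self q
  exact ((Set.Finite.pi' fun _ => hDir).subset fun s hs => hs.1).to_subtype

/-- The mean of `φ` over the `2d` lattice neighbours of `x`. -/
noncomputable def stepAvg (φ : Pt d → ℝ) (x : Pt d) : ℝ :=
  (∑ q, φ (x + step q)) / (2 * d)

variable {φ ψ : Pt d → ℝ} {x : Pt d}

lemma stepAvg_congr (h : ∀ q, φ (x + step q) = ψ (x + step q)) : stepAvg φ x = stepAvg ψ x := by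
  simp only [stepAvg, h]

lemma stepAvg_mono (h : ∀ q, φ (x + step q) ≤ ψ (x + step q)) : stepAvg φ x ≤ stepAvg ψ x := by
  unfold stepAvg
  gcongr with q
  exact h q

lemma stepAvg_add (φ ψ : Pt d → ℝ) (x : Pt d) :
    stepAvg (fun z => φ z + ψ z) x = stepAvg φ x + stepAvg ψ x := by
  simp only [stepAvg, Finset.sum_add_distrib, add_div]

lemma stepAvg_sub (φ ψ : Pt d → ℝ) (x : Pt d) :
    stepAvg (fun z => φ z - ψ z) x = stepAvg φ x - stepAvg ψ x := by
  simp only [stepAvg, Finset.sum_sub_distrib, sub_div]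

lemma stepAvg_const_mul (c : ℝ) (φ : Pt d → ℝ) (x : Pt d) :
    stepAvg (fun z => c * φ z) x = c * stepAvg φ x := by
  simp only [stepAvg, ← Finset.mul_sum, mul_div_assoc]

lemma stepAvg_sum {ι : Type*} (s : Finset ι) (φ : ι → Pt d → ℝ) (x : Pt d) :
    stepAvg (fun z => ∑ w ∈ s, φ w z) x = ∑ w ∈ s, stepAvg (φ w) x := by
  simp only [stepAvg]
  rw [Finset.sum_comm, Finset.sum_div]

lemma stepAvg_const [NeZero d] (c : ℝ) (x : Pt d) : stepAvg (fun _ => c) x = c := by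
  have hd : (d : ℝ) ≠ 0 := NeZero.ne _
  simp only [stepAvg, Finset.sum_const, Finset.card_univ, Fintype.card_prod, Fintype.card_fin,
    Fintype.card_bool, nsmul_eq_mul]
  push_cast
  field_simp

lemma stepAvg_comp_sub (φ : Pt d → ℝ) (x w : Pt d) :
    stepAvg (fun z => φ (z - w)) x = stepAvg φ (x - w) := by
  simp only [stepAvg, add_sub_right_comm]

lemma div_le_stepAvg (h : ∀ z, 0 ≤ φ z) (q : Fin d × Bool) :
    φ (x + step q) / (2 * d) ≤ stepAvg φ x := by
  unfold stepAvg
  gcongr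
  exact Finset.single_le_sum (f := fun q => φ (x + step q)) (fun q _ => h _) (Finset.mem_univ q)

lemma tendsto_stepAvg {u : ℕ → Pt d → ℝ} (h : ∀ z, Filter.Tendsto (u · z) Filter.atTop (nhds (φ z)))
    (x : Pt d) : Filter.Tendsto (fun T => stepAvg (u T) x) Filter.atTop (nhds (stepAvg φ x)) :=
  (tendsto_finsetSum _ fun _ _ => h _).div_const _

end Steps

section Paths

variable {d T : ℕ}

lemma prob_nonneg (P : (Fin T → Pt d) → Prop) : 0 ≤ prob d T P := by
  unfold prob
  positivity

lemma prob_congr {P Q : (Fin T → Pt d) → Prop} (h : ∀ s, P s ↔ Q s) : prob d T P = prob d T Q :=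
  congrArg (prob d T) (funext fun s => propext (h s))

lemma prob_eq_zero {P : (Fin T → Pt d) → Prop} (h : ∀ s, ¬ P s) : prob d T P = 0 := by
  have : IsEmpty {s : Fin T → Pt d // (∀ i, s i ∈ Dir d) ∧ P s} := ⟨fun s => h _ s.2.2⟩
  simp [prob]

lemma prob_zero_eq_one {P : (Fin 0 → Pt d) → Prop} (h : ∀ s, P s) : prob d 0 P = 1 := by
  simp [prob, h]

lemma card_steps_succ (P : (Fin (T + 1) → Pt d) → Prop) :
    Nat.card {s : Fin (T + 1) → Pt d // (∀ i, s i ∈ Dir d) ∧ P s} =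
      ∑ q, Nat.card {s : Fin T → Pt d // (∀ i, s i ∈ Dir d) ∧ P (Fin.cons (step q) s)} := by
  have := fun q => finite_steps_in_Dir T fun s : Fin T → Pt d => P (Fin.cons (step q) s)
  rw [← Nat.card_sigma]
  let cons : (Σ q, {s : Fin T → Pt d // (∀ i, s i ∈ Dir d) ∧ P (Fin.cons (step q) s)}) →
      {s : Fin (T + 1) → Pt d // (∀ i, s i ∈ Dir d) ∧ P s} := fun p =>
    ⟨Fin.cons (step p.1) p.2.1,
      Fin.cases (mem_Dir_iff_exists_step.2 ⟨p.1, rfl⟩) fun j => p.2.2.1 j, p.2.2.2⟩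
  refine (Nat.card_eq_of_bijective cons ⟨?_, ?_⟩).symm
  · rintro ⟨q, s, hs⟩ ⟨q', s', hs'⟩ h
    have hval : (Fin.cons (step q) s : Fin (T + 1) → Pt d) = Fin.cons (step q') s' :=
      congrArg Subtype.val h
    obtain ⟨hq, rfl⟩ := Fin.cons_injective2 hval
    obtain rfl := step_injective hq
    rfl
  · rintro ⟨s, hs, hP⟩
    obtain ⟨q, hq⟩ := mem_Dir_iff_exists_step.1 (hs 0)
    have hcons : (Fin.cons (step q) (Fin.tail s) : Fin (T + 1) → Pt d) = s :=
      hq ▸ Fin.cons_self_tail s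
    exact ⟨⟨q, Fin.tail s, fun i => hs i.succ, by rwa [hcons]⟩, Subtype.ext hcons⟩

lemma prob_succ (P : (Fin (T + 1) → Pt d) → Prop) :
    prob d (T + 1) P = (∑ q, prob d T fun s => P (Fin.cons (step q) s)) / (2 * d) := by
  simp only [prob, card_steps_succ]
  push_cast
  rw [← Finset.sum_div, div_div, pow_succ]

lemma wpos_zero (x : Pt d) (s : Fin T → Pt d) : wpos d x s 0 = x := by
  simp [wpos]

lemma wpos_cons_succ (x e : Pt d) (s : Fin T → Pt d) (t : ℕ) :
    wpos d x (Fin.cons e s : Fin (T + 1) → Pt d) (t + 1) = wpos d (x + e) s t := by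
  simp only [wpos, Finset.sum_filter, Fin.sum_univ_succ]
  simp [add_assoc]

lemma wpos_cons_avoids_iff (W : Set (Pt d)) (x e : Pt d) (s : Fin T → Pt d) (m : ℕ) :
    (∀ u, 1 ≤ u → u < m + 2 → wpos d x (Fin.cons e s : Fin (T + 1) → Pt d) u ∉ W) ↔
      x + e ∉ W ∧ ∀ u, 1 ≤ u → u < m + 1 → wpos d (x + e) s u ∉ W := by
  constructor
  · intro h
    refine ⟨?_, fun u _ hu => ?_⟩
    · simpa only [wpos_cons_succ, wpos_zero] using h 1 le_rfl (by lia)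
    · simpa only [wpos_cons_succ] using h (u + 1) (by lia) (by lia)
  · rintro ⟨hx, h⟩ u hu hum
    obtain ⟨v, rfl⟩ := Nat.exists_eq_add_of_le' hu
    rw [wpos_cons_succ]
    rcases v with _ | v
    · rwa [wpos_zero]
    · exact h _ (by lia) (by lia)

end Paths

section HittingProbabilities

variable {d : ℕ}

/-- `P_x(τ_W = t, S_{τ_W - 1} ∈ B)`. -/
noncomputable def hitProbAt (W B : Set (Pt d)) (t : ℕ) (x : Pt d) : ℝ :=
  prob d t fun s => 1 ≤ t ∧ wpos d x s t ∈ W ∧ wpos d x s (t - 1) ∈ B ∧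
    ∀ u, 1 ≤ u → u < t → wpos d x s u ∉ W

/-- `P_x(τ_W < ∞, S_{τ_W - 1} ∈ B)`. It covers both `retProb` (with `B = univ`) and `hitFrom`
(with `B = {y}`). -/
noncomputable def hitProb (W B : Set (Pt d)) (x : Pt d) : ℝ := ∑' t, hitProbAt W B t x

open Classical in
/-- The operator expressing `hitProb W B` by conditioning on the first step of the walk. -/
noncomputable def hitStep (W B : Set (Pt d)) (f : Pt d → ℝ) (x : Pt d) : ℝ :=
  stepAvg (fun z => if z ∈ W then B.indicator 1 x else f z) x

lemma retProb_eq_hitProb (W : Set (Pt d)) (x : Pt d) :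
    retProb d W x = hitProb W Set.univ x := by
  simp [retProb, hitProb, hitProbAt]

lemma hitFrom_eq_hitProb (W : Set (Pt d)) (x y : Pt d) :
    hitFrom d W x y = hitProb W {y} x := rfl

variable {W V B : Set (Pt d)} {x : Pt d}

lemma indicator_one_nonneg : 0 ≤ B.indicator (1 : Pt d → ℝ) x :=
  Set.indicator_nonneg (fun _ _ => zero_le_one) x

lemma indicator_one_le_one : B.indicator (1 : Pt d → ℝ) x ≤ 1 :=
  Set.indicator_le_self' (fun _ _ => zero_le_one) x

lemma hitProbAt_nonneg (t : ℕ) : 0 ≤ hitProbAt W B t x := prob_nonneg _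

lemma hitProbAt_zero : hitProbAt W B 0 x = 0 := prob_eq_zero fun _ h => by simp at h

lemma hitProbAt_one : hitProbAt W B 1 x = hitStep W B 0 x := by
  rw [hitProbAt, prob_succ, hitStep, stepAvg]
  congr 1
  refine Finset.sum_congr rfl fun q _ => ?_
  by_cases hW : x + step q ∈ W <;> by_cases hB : x ∈ B
  · simpa [hW, hB] using prob_zero_eq_one fun s => by
      simp only [wpos_cons_succ x _ s 0, wpos_zero, hW, hB]
      lia
  all_goals
    simpa [hW, hB] using prob_eq_zero fun s => by
      simp [wpos_zero, wpos_cons_succ x _ s 0, hW, hB]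

lemma hitProbAt_add_two (t : ℕ) :
    hitProbAt W B (t + 2) x = stepAvg (Wᶜ.indicator (hitProbAt W B (t + 1))) x := by
  rw [hitProbAt, prob_succ, stepAvg]
  congr 1
  refine Finset.sum_congr rfl fun q _ => ?_
  by_cases hW : x + step q ∈ W
  · rw [Set.indicator_of_notMem (by simpa using hW)]
    refine prob_eq_zero fun s h => ?_
    exact ((wpos_cons_avoids_iff W x _ s t).1 h.2.2.2).1 hW
  · rw [Set.indicator_of_mem hW]
    refine prob_congr fun s => ?_
    simp only [wpos_cons_avoids_iff, Nat.add_sub_cancel, wpos_cons_succ,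
      show t + 2 - 1 = t + 1 from rfl, hW, not_false_eq_true, true_and]
    lia

open Classical in
lemma hitStep_le_hitStep {W' B' : Set (Pt d)} {f g : Pt d → ℝ}
    (h : ∀ z, (if z ∈ W then B.indicator 1 x else f z) ≤ if z ∈ W' then B'.indicator 1 x else g z) :
    hitStep W B f x ≤ hitStep W' B' g x := by
  simp only [hitStep]
  exact stepAvg_mono fun q => by convert h (x + step q)

lemma hitStep_mono {f g : Pt d → ℝ} (h : f ≤ g) : hitStep W B f ≤ hitStep W B g := fun x =>
  hitStep_le_hitStep fun z => by
    split_ifs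
    exacts [le_rfl, h z]

lemma hitStep_eq_add (f : Pt d → ℝ) :
    hitStep W B f x = hitStep W B 0 x + stepAvg (Wᶜ.indicator f) x := by
  rw [hitStep, hitStep, ← stepAvg_add]
  refine stepAvg_congr fun q => ?_
  by_cases hW : x + step q ∈ W <;> simp [hW]

lemma hitStep_one_le_one [NeZero d] : hitStep W B 1 ≤ 1 := fun x =>
  (stepAvg_mono fun q => by
    split_ifs
    exacts [indicator_one_le_one, le_rfl]).trans_eq (stepAvg_const 1 x)

lemma sum_hitProbAt_succ (T : ℕ) :
    ∑ t ∈ Finset.range (T + 2), hitProbAt W B t x =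
      hitStep W B (fun z => ∑ t ∈ Finset.range (T + 1), hitProbAt W B t z) x := by
  have hind : Wᶜ.indicator (fun z => ∑ t ∈ Finset.range (T + 1), hitProbAt W B t z) =
      fun z => ∑ t ∈ Finset.range T, Wᶜ.indicator (hitProbAt W B (t + 1)) z := by
    ext z
    by_cases hz : z ∈ W <;> simp [hz, Finset.sum_range_succ', hitProbAt_zero]
  rw [hitStep_eq_add, hind, stepAvg_sum, Finset.sum_range_succ', Finset.sum_range_succ',
    hitProbAt_zero, hitProbAt_one, add_zero, add_comm]
  simp only [hitProbAt_add_two]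

lemma sum_hitProbAt_le {f : Pt d → ℝ} (hf : 0 ≤ f) (hstep : hitStep W B f ≤ f) (T : ℕ) :
    ∀ x, ∑ t ∈ Finset.range (T + 1), hitProbAt W B t x ≤ f x := by
  induction T with
  | zero => exact fun x => by simpa [hitProbAt_zero] using hf x
  | succ T ih =>
    exact fun x => (sum_hitProbAt_succ T).trans_le ((hitStep_mono ih x).trans (hstep x))

lemma hitProb_nonneg : 0 ≤ hitProb W B x := tsum_nonneg fun _ => hitProbAt_nonneg _

variable [NeZero d]

lemma summable_hitProbAt (W B : Set (Pt d)) (x : Pt d) : Summable (hitProbAt W B · x) :=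
  summable_of_sum_range_le (fun _ => hitProbAt_nonneg _) fun T =>
    (Finset.sum_le_sum_of_subset_of_nonneg (Finset.range_subset_range.2 T.le_succ)
      fun _ _ _ => hitProbAt_nonneg _).trans
    (sum_hitProbAt_le zero_le_one hitStep_one_le_one T x)

lemma hitProb_le_of_hitStep_le {f : Pt d → ℝ} (hf : 0 ≤ f) (hstep : hitStep W B f ≤ f) :
    hitProb W B ≤ f := fun x =>
  le_of_tendsto
    ((summable_hitProbAt W B x).tendsto_sum_tsum_nat.comp (Filter.tendsto_add_atTop_nat 1))
    (Filter.Eventually.of_forall fun T => sum_hitProbAt_le hf hstep T x)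

lemma hitStep_hitProb (W B : Set (Pt d)) : hitStep W B (hitProb W B) = hitProb W B := by
  have hlim := fun (k : ℕ) z =>
    (summable_hitProbAt W B z).tendsto_sum_tsum_nat.comp (Filter.tendsto_add_atTop_nat k)
  refine funext fun x => tendsto_nhds_unique (tendsto_stepAvg (fun z => ?_) x)
    ((hlim 2 x).congr fun T => sum_hitProbAt_succ T)
  by_cases hz : z ∈ W
  · simp only [hz, if_true, tendsto_const_nhds]
  · simp only [hz, if_false]
    exact hlim 1 z

lemma hitProb_le_one : hitProb W B x ≤ 1 :=
  hitProb_le_of_hitStep_le zero_le_one hitStep_one_le_one x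

lemma hitProb_le_hitProb_univ : hitProb W B x ≤ hitProb W Set.univ x := by
  refine hitProb_le_of_hitStep_le (f := hitProb W Set.univ) (fun _ => hitProb_nonneg)
    (fun z => ?_) x
  conv_rhs => rw [← hitStep_hitProb]
  exact hitStep_le_hitStep fun _ => by
    split_ifs
    exacts [by simpa using indicator_one_le_one, le_rfl]

lemma hitProb_univ_mono (h : W ⊆ V) : hitProb W Set.univ x ≤ hitProb V Set.univ x := by
  refine hitProb_le_of_hitStep_le (f := hitProb V Set.univ) (fun _ => hitProb_nonneg)
    (fun z => ?_) x
  conv_rhs => rw [← hitStep_hitProb]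
  exact hitStep_le_hitStep fun v => by
    split_ifs with hW hV hV
    exacts [le_rfl, absurd (h hW) hV, by simpa using hitProb_le_one, le_rfl]

lemma hitProb_union_univ_le :
    hitProb (W ∪ V) Set.univ x ≤ hitProb W Set.univ x + hitProb V Set.univ x := by
  refine hitProb_le_of_hitStep_le
    (f := fun x => hitProb W Set.univ x + hitProb V Set.univ x)
    (fun _ => add_nonneg hitProb_nonneg hitProb_nonneg) (fun z => ?_) x
  nth_rw 2 [← hitStep_hitProb W, ← hitStep_hitProb V]
  simp only [hitStep, ← stepAvg_add]
  refine stepAvg_mono fun q => ?_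
  have hW := hitProb_nonneg (W := W) (B := Set.univ) (x := z + step q)
  have hV := hitProb_nonneg (W := V) (B := Set.univ) (x := z + step q)
  by_cases h1 : z + step q ∈ W <;> by_cases h2 : z + step q ∈ V <;> simp [h1, h2, hW, hV]

/-- A walk hitting `W` hits `W ∪ V` at the same time unless it visits `V` first. -/
lemma hitProb_le_hitProb_union_add {M : ℝ} (hM : 0 ≤ M) (hV : ∀ v ∈ V, hitProb W B v ≤ M) :
    hitProb W B x ≤ hitProb (W ∪ V) B x + M * hitProb V Set.univ x := by
  let f : Pt d → ℝ := fun z =>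
    min (hitProb (W ∪ V) B z + M * hitProb V Set.univ z) (hitProb W B z)
  have hf : 0 ≤ f := fun z => le_min
    (add_nonneg hitProb_nonneg (mul_nonneg hM hitProb_nonneg)) hitProb_nonneg
  have hle : f ≤ hitProb W B := fun _ => min_le_right _ _
  refine (hitProb_le_of_hitStep_le hf (fun z => le_min ?_ ?_) x).trans (min_le_left _ _)
  · rw [← hitStep_hitProb (W ∪ V), ← hitStep_hitProb V]
    simp only [hitStep, ← stepAvg_const_mul, ← stepAvg_add]
    refine stepAvg_mono fun q => ?_
    have hz := hitProb_nonneg (W := V) (B := Set.univ) (x := z + step q)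
    have hB := indicator_one_nonneg (B := B) (x := z)
    by_cases h1 : z + step q ∈ W <;> by_cases h2 : z + step q ∈ V <;>
      simp only [h1, h2, Set.mem_union, or_true, or_false, if_true, if_false,
        Set.indicator_univ, Pi.one_apply]
    · linarith
    · nlinarith
    · linarith [hle (z + step q), hV _ h2]
    · exact min_le_left _ _
  · exact (hitStep_mono hle z).trans_eq (congrFun (hitStep_hitProb W B) z)

lemma exists_step_mem_of_hitProb_ne_zero {y : Pt d} (hx : x ∉ W) (h : hitProb W {y} x ≠ 0) :
    y ∉ W ∧ ∃ q, y + step q ∈ W := by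
  by_contra! hy
  refine h (le_antisymm ?_ hitProb_nonneg)
  calc hitProb W {y} x ≤ W.indicator 1 x := hitProb_le_of_hitStep_le
        (f := W.indicator 1) (fun _ => indicator_one_nonneg) (fun z => ?_) x
    _ = 0 := by simp [hx]
  by_cases hz : z ∈ W
  · rw [Set.indicator_of_mem hz, Pi.one_apply, ← stepAvg_const 1 z]
    exact stepAvg_mono fun q => by
      split_ifs
      exacts [indicator_one_le_one, indicator_one_le_one]
  · rw [Set.indicator_of_notMem hz, ← stepAvg_const 0 z]
    refine stepAvg_mono fun q => ?_
    split_ifs with hq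
    · rw [Set.indicator_of_notMem]
      rintro rfl
      exact hy hz q hq
    · simp [hq]

lemma hitProb_le_of_stepAvg_le {f : Pt d → ℝ} (hf : 0 ≤ f) (hW : ∀ w ∈ W, 1 ≤ f w)
    (havg : ∀ x, stepAvg f x ≤ f x) : hitProb W B ≤ f :=
  hitProb_le_of_hitStep_le hf fun x => (stepAvg_mono fun q => by
    split_ifs with h
    exacts [indicator_one_le_one.trans (hW _ h), le_rfl]).trans (havg x)

/-- The probability that the walk from `x` avoids `A` at the times `1, …, T`. -/
noncomputable def avoidProb (A : Set (Pt d)) (T : ℕ) (x : Pt d) : ℝ :=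
  prob d T fun s => ∀ t, 1 ≤ t → t ≤ T → wpos d x s t ∉ A

omit [NeZero d] in
lemma avoidProb_succ (A : Set (Pt d)) (T : ℕ) (x : Pt d) :
    avoidProb A (T + 1) x = stepAvg (Aᶜ.indicator (avoidProb A T)) x := by
  rw [avoidProb, prob_succ, stepAvg]
  congr 1
  refine Finset.sum_congr rfl fun q _ => ?_
  by_cases hq : x + step q ∈ A
  · rw [Set.indicator_of_notMem (by simpa using hq)]
    exact prob_eq_zero fun s h => ((wpos_cons_avoids_iff A x _ s T).1
      fun u hu huT => h u hu (Nat.lt_succ_iff.1 huT)).1 hq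
  · rw [Set.indicator_of_mem hq]
    refine prob_congr fun s => ?_
    have hiff := wpos_cons_avoids_iff A x (step q) s T
    simp only [hq, not_false_eq_true, true_and, Nat.lt_succ_iff] at hiff
    exact hiff

lemma avoidProb_eq_one_sub_sum (A : Set (Pt d)) (T : ℕ) :
    ∀ x, avoidProb A T x = 1 - ∑ t ∈ Finset.range (T + 1), hitProbAt A Set.univ t x := by
  induction T with
  | zero =>
    intro x
    rw [avoidProb, prob_zero_eq_one fun s t _ _ => by lia]
    simp [hitProbAt_zero]
  | succ T ih =>
    intro x
    rw [avoidProb_succ, sum_hitProbAt_succ, hitStep, ← stepAvg_const 1 x, ← stepAvg_sub]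
    refine stepAvg_congr fun q => ?_
    by_cases hq : x + step q ∈ A <;> simp [hq, ih]

lemma esc_eq_one_sub_hitProb {A : Set (Pt d)} (hx : x ∈ A) :
    esc d A x = 1 - hitProb A Set.univ x := by
  have hanti : Antitone fun T => avoidProb A T x := antitone_nat_of_succ_le fun T => by
    rw [avoidProb_eq_one_sub_sum, avoidProb_eq_one_sub_sum, Finset.sum_range_succ _ (T + 1)]
    linarith [hitProbAt_nonneg (W := A) (B := Set.univ) (x := x) (T + 1)]
  have hbdd : BddBelow (Set.range fun T => avoidProb A T x) :=
    ⟨0, Set.forall_mem_range.2 fun T => prob_nonneg _⟩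
  have hlim := ((summable_hitProbAt A Set.univ x).tendsto_sum_tsum_nat.comp
    (Filter.tendsto_add_atTop_nat 1)).const_sub 1
  rw [esc, if_pos hx]
  exact tendsto_nhds_unique (tendsto_atTop_ciInf hanti hbdd)
    (hlim.congr fun T => (avoidProb_eq_one_sub_sum A T x).symm)

lemma esc_nonneg {A : Set (Pt d)} : 0 ≤ esc d A x := by
  by_cases hx : x ∈ A
  · rw [esc_eq_one_sub_hitProb hx]
    exact sub_nonneg.2 hitProb_le_one
  · simp [esc, hx]

end HittingProbabilities

section PotentialKernels

variable {d : ℕ}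

/-- The squared Euclidean norm. -/
noncomputable def sqNorm (z : Pt d) : ℝ := ∑ i, (z i : ℝ) ^ 2

/-- The Euclidean inner product of `z` with the unit step `step q`. -/
noncomputable def along (z : Pt d) (q : Fin d × Bool) : ℝ := if q.2 then z q.1 else -z q.1

lemma sqNorm_nonneg (z : Pt d) : 0 ≤ sqNorm z := Finset.sum_nonneg fun _ _ => sq_nonneg _

lemma sqNorm_neg (z : Pt d) : sqNorm (-z) = sqNorm z := by
  simp [sqNorm]

lemma sqNorm_sub_comm (z w : Pt d) : sqNorm (z - w) = sqNorm (w - z) := by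
  rw [← sqNorm_neg, neg_sub]

lemma sqNorm_add_le (z w : Pt d) : sqNorm (z + w) ≤ 2 * sqNorm z + 2 * sqNorm w := by
  simp only [sqNorm, Finset.mul_sum, ← Finset.sum_add_distrib]
  refine Finset.sum_le_sum fun i _ => ?_
  push_cast [Pi.add_apply]
  linarith [add_sq_le (a := (z i : ℝ)) (b := w i)]

lemma sqNorm_eq_zero {z : Pt d} : sqNorm z = 0 ↔ z = 0 := by
  simp [sqNorm, Finset.sum_eq_zero_iff_of_nonneg, sq_nonneg, funext_iff]

lemma sq_le_sqNorm (z : Pt d) (i : Fin d) : (z i : ℝ) ^ 2 ≤ sqNorm z :=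
  Finset.single_le_sum (f := fun i => (z i : ℝ) ^ 2) (fun _ _ => sq_nonneg _) (Finset.mem_univ i)

lemma along_sq_le (z : Pt d) (q : Fin d × Bool) : along z q ^ 2 ≤ sqNorm z := by
  refine le_of_eq_of_le ?_ (sq_le_sqNorm z q.1)
  unfold along
  split_ifs <;> ring

lemma sqNorm_add_smul_step (z : Pt d) (q : Fin d × Bool) (k : ℕ) :
    sqNorm (z + k • step q) = sqNorm z + 2 * k * along z q + (k : ℝ) ^ 2 := by
  have hoff : ∀ j ∈ Finset.univ.erase q.1,
      (((z + k • step q) j : ℤ) : ℝ) ^ 2 = (z j : ℝ) ^ 2 := fun j hj => by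
    simp [step, Pi.single_eq_of_ne (Finset.ne_of_mem_erase hj)]
  unfold sqNorm
  rw [← Finset.add_sum_erase _ _ (Finset.mem_univ q.1), Finset.sum_congr rfl hoff,
    ← Finset.add_sum_erase _ (fun i => (z i : ℝ) ^ 2) (Finset.mem_univ q.1)]
  obtain ⟨i, b⟩ := q
  cases b <;> simp [step, along] <;> ring

lemma sqNorm_add_step (z : Pt d) (q : Fin d × Bool) :
    sqNorm (z + step q) = sqNorm z + 2 * along z q + 1 := by
  simpa using sqNorm_add_smul_step z q 1

lemma sqNorm_step (q : Fin d × Bool) : sqNorm (step q) = 1 := by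
  simpa [sqNorm, along] using sqNorm_add_step 0 q

lemma sum_along (z : Pt d) : ∑ q, along z q = 0 := by
  simp [along, Fintype.sum_prod_type]

lemma sum_along_sq (z : Pt d) : ∑ q, along z q ^ 2 = 2 * sqNorm z := by
  simp [along, Fintype.sum_prod_type, sqNorm, ← two_mul, Finset.mul_sum]

lemma sum_along_cube (z : Pt d) : ∑ q, along z q ^ 3 = 0 := by
  simp [along, Fintype.sum_prod_type, Odd.neg_pow (by decide : Odd 3)]

/-- The decay exponent of `P_x(τ_{0} < ∞)` as a power of `|x|²`. -/
noncomputable def decayExp (d : ℕ) : ℝ := ((d : ℝ) - 2) / 2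

lemma decayExp_pos (hd : 3 ≤ d) : 0 < decayExp d := by
  have : (3 : ℝ) ≤ d := mod_cast hd
  unfold decayExp
  linarith

/-- The third-order Taylor polynomial of `s ↦ (1 + s) ^ (-α)` at `0`. -/
noncomputable def cubicTaylor (α s : ℝ) : ℝ :=
  1 - α * s + α * (α + 1) / 2 * s ^ 2 - α * (α + 1) * (α + 2) / 6 * s ^ 3

lemma exists_abs_rpow_sub_cubicTaylor_le (α : ℝ) :
    ∃ K > 0, ∃ ε > 0, ∀ s, |s| ≤ ε → |(1 + s) ^ (-α) - cubicTaylor α s| ≤ K * s ^ 4 := by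
  obtain ⟨K, hK, hbound⟩ :=
    ((Real.one_add_rpow_hasFPowerSeriesAt_zero (a := -α)).isBigO_sub_partialSum_pow 4).exists_pos
  rw [Asymptotics.IsBigOWith_def, Metric.eventually_nhds_iff] at hbound
  obtain ⟨ε, hε, hbound⟩ := hbound
  refine ⟨K, hK, ε / 2, by positivity, fun s hs => ?_⟩
  convert hbound (y := s) (by rw [dist_zero_right, Real.norm_eq_abs]; linarith) using 1
  · rw [Real.norm_eq_abs]
    congr 2
    · simp
    · simp only [cubicTaylor, FormalMultilinearSeries.partialSum, Finset.sum_range_succ,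
        Finset.sum_range_zero, binomialSeries_apply]
      simp [Ring.choose_eq_smul, descPochhammer, Polynomial.smeval_mul, Polynomial.smeval_sub,
        Polynomial.smeval_X, Polynomial.smeval_one, Nat.factorial]
      ring
  · simp [Even.pow_abs (by decide : Even 4)]

/-- The value of `|z|² + M` changes by the factor `1 + increment z u q` along `step q`, where
`u = |z|² + M`. -/
noncomputable def increment (z : Pt d) (u : ℝ) (q : Fin d × Bool) : ℝ := (2 * along z q + 1) / u

lemma increment_sq_le {z : Pt d} {u : ℝ} (hu : 1 ≤ u) (hz : sqNorm z ≤ 2 * u) (q : Fin d × Bool) :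
    increment z u q ^ 2 ≤ 25 / u := by
  have hu0 : 0 < u := by linarith
  rw [increment, div_pow, div_le_div_iff₀ (by positivity) hu0]
  nlinarith [along_sq_le z q, sq_nonneg (2 * along z q - 1)]

lemma sum_cubicTaylor_increment {z : Pt d} {M u : ℝ} (hu : u ≠ 0) (hM : sqNorm z + M = u) :
    ∑ q, cubicTaylor (decayExp d) (increment z u q) =
      2 * d * (1 - decayExp d * M / u ^ 2) + decayExp d * (decayExp d + 1) *
        (d - (decayExp d + 2) * (4 * sqNorm z + d / 3) / u) / u ^ 2 := by
  set α := decayExp d with hα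
  have hd : (d : ℝ) = 2 * α + 2 := by rw [hα, decayExp]; ring
  set A := α * (α + 1) / 2 / u ^ 2
  set B := α * (α + 1) * (α + 2) / 6 / u ^ 3
  have hpoly (q) : cubicTaylor α (increment z u q) =
      (1 - α / u + A - B) + (-2 * α / u + 4 * A - 6 * B) * along z q +
        (4 * A - 12 * B) * along z q ^ 2 - 8 * B * along z q ^ 3 := by
    simp only [cubicTaylor, increment, A, B]
    field_simp
    ring
  have hcard : ((Finset.univ : Finset (Fin d × Bool)).card : ℝ) = 2 * d := by
    simp [mul_comm]
  simp only [hpoly, Finset.sum_sub_distrib, Finset.sum_add_distrib, ← Finset.mul_sum, sum_along,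
    sum_along_sq, sum_along_cube, Finset.sum_const, nsmul_eq_mul, hcard, A, B]
  rw [eq_sub_of_add_eq hM, hd]
  field_simp
  ring

/-- The kernel `(|z|² + M) ^ (-(d - 2) / 2)`: Newton's potential `|z| ^ (2 - d)`, shifted by `M` to
correct the sign of its discrete Laplacian. -/
noncomputable def newton (M : ℝ) (z : Pt d) : ℝ := (sqNorm z + M) ^ (-decayExp d)

lemma newton_add_step {M : ℝ} {z : Pt d} (hu : 0 < sqNorm z + M) {q : Fin d × Bool}
    (hq : |increment z (sqNorm z + M) q| ≤ 1) :
    newton M (z + step q) =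
      newton M z * (1 + increment z (sqNorm z + M) q) ^ (-decayExp d) := by
  have hq' : 0 ≤ 1 + increment z (sqNorm z + M) q := by linarith [(abs_le.1 hq).1]
  rw [newton, newton, ← Real.mul_rpow hu.le hq', sqNorm_add_step, increment]
  congr 1
  field_simp
  ring

lemma exists_abs_sum_rpow_sub_sum_cubicTaylor_le (α : ℝ) :
    ∃ K > 0, ∃ U ≥ 1, ∀ (z : Pt d) (u : ℝ), U ≤ u → sqNorm z ≤ 2 * u →
      (∀ q, |increment z u q| ≤ 1) ∧
      |∑ q, (1 + increment z u q) ^ (-α) - ∑ q, cubicTaylor α (increment z u q)| ≤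
        2 * d * (K / u ^ 2) := by
  obtain ⟨K, hK, ε, hε, hTaylor⟩ := exists_abs_rpow_sub_cubicTaylor_le α
  refine ⟨K * 625, by positivity, max 25 (25 / ε ^ 2), le_max_of_le_left (by norm_num),
    fun z u hu hz => ?_⟩
  have hu25 : 25 ≤ u := (le_max_left _ _).trans hu
  have hu0 : 0 < u := by linarith
  have hsq := fun q => increment_sq_le (by linarith) hz q
  have hsmall (q) : |increment z u q| ≤ ε :=
    abs_le_of_sq_le_sq ((hsq q).trans
      ((div_le_comm₀ (by positivity) hu0).1 ((le_max_right _ _).trans hu))) hε.le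
  refine ⟨fun q => abs_le_of_sq_le_sq ((hsq q).trans ?_) zero_le_one, ?_⟩
  · rw [div_le_iff₀ hu0]
    linarith
  rw [← Finset.sum_sub_distrib]
  calc |∑ q, ((1 + increment z u q) ^ (-α) - cubicTaylor α (increment z u q))|
      ≤ ∑ q : Fin d × Bool, K * 625 / u ^ 2 := by
        refine (Finset.abs_sum_le_sum_abs _ _).trans (Finset.sum_le_sum fun q _ => ?_)
        calc _ ≤ K * increment z u q ^ 4 := hTaylor _ (hsmall q)
          _ = K * (increment z u q ^ 2) ^ 2 := by ring
          _ ≤ K * (25 / u) ^ 2 := by gcongr; exact hsq q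
          _ = K * 625 / u ^ 2 := by rw [div_pow]; ring
    _ = 2 * d * (K * 625 / u ^ 2) := by simp [mul_comm (2 : ℝ)]

lemma abs_taylor_error_le (α : ℝ) {z : Pt d} {u : ℝ} (hu : 1 ≤ u) (hz : sqNorm z ≤ 2 * u) :
    |α * (α + 1) * (d - (α + 2) * (4 * sqNorm z + d / 3) / u)| ≤
      |α * (α + 1)| * (d + |α + 2| * (8 + d / 3)) := by
  have hratio : (4 * sqNorm z + d / 3) / u ≤ 8 + d / 3 := by
    rw [add_div]
    refine add_le_add ?_ (div_le_self (by positivity) hu)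
    rw [div_le_iff₀ (by linarith)]
    linarith
  have h0 : 0 ≤ (4 * sqNorm z + d / 3) / u := by
    have := sqNorm_nonneg z
    positivity
  rw [abs_mul]
  refine mul_le_mul_of_nonneg_left ((abs_sub _ _).trans ?_) (abs_nonneg _)
  rw [abs_of_nonneg (Nat.cast_nonneg d), mul_div_assoc, abs_mul, abs_of_nonneg h0]
  gcongr

lemma abs_div_sub_le {S X P D K L : ℝ} (hD : 0 < D) (hS : |S - (D * X + P)| ≤ D * K)
    (hP : |P| ≤ L) : |S / D - X| ≤ K + L / D := by
  rw [← mul_le_mul_iff_right₀ hD, ← abs_of_pos hD, ← abs_mul, abs_of_pos hD, mul_sub, mul_add,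
    mul_div_cancel₀ _ hD.ne', mul_div_cancel₀ _ hD.ne']
  calc |S - D * X| = |(S - (D * X + P)) + P| := by ring_nf
    _ ≤ D * K + L := (abs_add_le _ _).trans (add_le_add hS hP)

/-- The error is uniform in `M`, so the discrete Laplacian of `newton M` has the sign of `-M` once
`|M|` is large. -/
lemma exists_abs_stepAvg_newton_sub_le (d : ℕ) [NeZero d] :
    ∃ K > 0, ∃ U ≥ 1, ∀ (M : ℝ) (z : Pt d), U ≤ sqNorm z + M → |M| ≤ sqNorm z + M →
      |stepAvg (newton M) z - newton M z * (1 - decayExp d * M / (sqNorm z + M) ^ 2)| ≤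
        newton M z * (K / (sqNorm z + M) ^ 2) := by
  obtain ⟨K, hK, U, hU, hsum⟩ := exists_abs_sum_rpow_sub_sum_cubicTaylor_le (d := d) (decayExp d)
  set α := decayExp d
  set L := |α * (α + 1)| * (d + |α + 2| * (8 + d / 3))
  have hd : (0 : ℝ) < 2 * d := by have := NeZero.pos d; positivity
  refine ⟨K + L / (2 * d), by positivity, U, hU, fun M z hUu hMu => ?_⟩
  obtain ⟨u, hu⟩ : ∃ u, sqNorm z + M = u := ⟨_, rfl⟩
  rw [hu] at hUu hMu ⊢
  have hu0 : 0 < u := by linarith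
  have hz : sqNorm z ≤ 2 * u := by linarith [neg_abs_le M]
  obtain ⟨hincr, hrem⟩ := hsum z u hUu hz
  rw [sum_cubicTaylor_increment hu0.ne' hu] at hrem
  have havg : stepAvg (newton M) z =
      newton M z * ((∑ q, (1 + increment z u q) ^ (-α)) / (2 * d)) := by
    rw [stepAvg, ← mul_div_assoc, Finset.mul_sum]
    congr 1
    exact Finset.sum_congr rfl fun q _ => hu ▸ newton_add_step (hu ▸ hu0) (hu ▸ hincr q)
  have hnewton : 0 ≤ newton M z := Real.rpow_nonneg (hu ▸ hu0.le) _
  rw [havg, ← mul_sub, abs_mul, abs_of_nonneg hnewton]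
  gcongr
  calc |(∑ q, (1 + increment z u q) ^ (-α)) / (2 * d) - (1 - α * M / u ^ 2)|
      ≤ K / u ^ 2 + L / u ^ 2 / (2 * d) := abs_div_sub_le hd hrem <| by
        rw [abs_div, abs_of_pos (pow_pos hu0 2)]
        gcongr
        exact abs_taylor_error_le α (hU.trans hUu) hz
    _ = (K + L / (2 * d)) / u ^ 2 := by ring

/-- `newton M` normalised to take the value `1` at the origin; superharmonic for large `M`. -/
noncomputable def superKernel (M : ℝ) (z : Pt d) : ℝ := (sqNorm z / M + 1) ^ (-decayExp d)

/-- `newton (-M)` in the normalisation of `superKernel`, capped at `1` near the origin where it is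
singular; subharmonic away from the origin for large `M`. -/
noncomputable def subKernel (M : ℝ) (z : Pt d) : ℝ :=
  (max (sqNorm z / M - 1) 1) ^ (-decayExp d)

/-- `M` is large enough for `superKernel M` to be superharmonic, and for `subKernel M` to be
subharmonic outside the ball of squared radius `6 M`. -/
structure IsAdmissibleShift (d : ℕ) (M : ℝ) : Prop where
  one_le : 1 ≤ M
  stepAvg_superKernel_le (z : Pt d) : stepAvg (superKernel M) z ≤ superKernel M z
  subKernel_le_stepAvg {z : Pt d} (hz : 6 * M ≤ sqNorm z) :
    subKernel M z ≤ stepAvg (subKernel M) z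

lemma half_sqNorm_sub_one_le_sqNorm_add_step (z : Pt d) (q : Fin d × Bool) :
    sqNorm z / 2 - 1 ≤ sqNorm (z + step q) := by
  have hz := sqNorm_add_step z q
  nlinarith [along_sq_le z q, sq_nonneg (along z q + 2)]

lemma superKernel_eq_mul_newton {M : ℝ} (hM : 0 < M) (z : Pt d) :
    superKernel M z = M ^ decayExp d * newton M z := by
  have hz := sqNorm_nonneg z
  rw [superKernel, newton, ← div_add_same hM.ne',
    Real.div_rpow (by positivity) hM.le, Real.rpow_neg hM.le, div_inv_eq_mul, mul_comm]

lemma subKernel_eq_mul_newton {M : ℝ} (hM : 0 < M) {z : Pt d} (hz : 2 * M ≤ sqNorm z) :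
    subKernel M z = M ^ decayExp d * newton (-M) z := by
  rw [subKernel, max_eq_left, newton, ← div_sub_same hM.ne', ← sub_eq_add_neg,
    Real.div_rpow (by linarith) hM.le, Real.rpow_neg hM.le, div_inv_eq_mul, mul_comm]
  rw [le_sub_iff_add_le, le_div_iff₀ hM]
  linarith

lemma exists_isAdmissibleShift (hd : 3 ≤ d) : ∃ M, IsAdmissibleShift d M := by
  have : NeZero d := ⟨by lia⟩
  have hα := decayExp_pos hd
  obtain ⟨K, -, U, hU, hnewton⟩ := exists_abs_stepAvg_newton_sub_le d
  set M := max U (K / decayExp d)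
  have hUM : U ≤ M := le_max_left _ _
  have hKM : K ≤ decayExp d * M := (div_le_iff₀' hα).1 (le_max_right _ _)
  have hM : 1 ≤ M := hU.trans hUM
  have hM0 : 0 < M := by linarith
  refine ⟨M, hM, fun z => ?_, fun {z} hz => ?_⟩
  · have hz := sqNorm_nonneg z
    have hbound := abs_le.1 (hnewton M z (by linarith) (by rw [abs_of_pos] <;> linarith))
    have hpos : 0 ≤ newton M z := Real.rpow_nonneg (by linarith) _
    have herr : K / (sqNorm z + M) ^ 2 ≤ decayExp d * M / (sqNorm z + M) ^ 2 := by gcongr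
    simp only [funext (superKernel_eq_mul_newton (d := d) hM0), stepAvg_const_mul]
    gcongr
    nlinarith
  · have hbound := abs_le.1 (hnewton (-M) z (by linarith)
      (by rw [abs_neg, abs_of_pos] <;> linarith))
    have hpos : 0 ≤ newton (-M) z := Real.rpow_nonneg (by linarith) _
    have herr : K / (sqNorm z + -M) ^ 2 ≤ decayExp d * M / (sqNorm z + -M) ^ 2 := by gcongr
    have hnbr (q) : subKernel M (z + step q) = M ^ decayExp d * newton (-M) (z + step q) :=
      subKernel_eq_mul_newton hM0
        (by linarith [half_sqNorm_sub_one_le_sqNorm_add_step z q])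
    rw [stepAvg_congr (ψ := fun w => M ^ decayExp d * newton (-M) w) hnbr, stepAvg_const_mul,
      subKernel_eq_mul_newton hM0 (by linarith)]
    gcongr
    rw [mul_neg, neg_div, sub_neg_eq_add] at hbound
    nlinarith

variable {M : ℝ} {z : Pt d}

lemma superKernel_nonneg (hM : 0 ≤ M) (z : Pt d) : 0 ≤ superKernel M z :=
  Real.rpow_nonneg (add_nonneg (div_nonneg (sqNorm_nonneg z) hM) zero_le_one) _

lemma superKernel_zero (M : ℝ) : superKernel M (0 : Pt d) = 1 := by
  simp [superKernel, sqNorm]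

lemma superKernel_le_rpow (hd : 3 ≤ d) (hM : 0 < M) {s : ℝ} (hs : 0 < s) (hz : s * M ≤ sqNorm z) :
    superKernel M z ≤ s ^ (-decayExp d) := by
  refine Real.rpow_le_rpow_of_nonpos hs ?_ (neg_nonpos.2 (decayExp_pos hd).le)
  linarith [(le_div_iff₀ hM).2 hz]

lemma subKernel_nonneg (M : ℝ) (z : Pt d) : 0 ≤ subKernel M z :=
  Real.rpow_nonneg (zero_le_one.trans (le_max_right _ _)) _

lemma subKernel_le_one (hd : 3 ≤ d) (M : ℝ) (z : Pt d) : subKernel M z ≤ 1 :=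
  Real.rpow_le_one_of_one_le_of_nonpos (le_max_right _ _) (neg_nonpos.2 (decayExp_pos hd).le)

lemma superKernel_le_subKernel (hd : 3 ≤ d) (hM : 0 < M) (z : Pt d) :
    superKernel M z ≤ subKernel M z := by
  have hz : 0 ≤ sqNorm z / M := div_nonneg (sqNorm_nonneg z) hM.le
  exact Real.rpow_le_rpow_of_nonpos (lt_max_of_lt_right one_pos)
    (max_le (by linarith) (by linarith)) (neg_nonpos.2 (decayExp_pos hd).le)

lemma hitProb_le_sum_superKernel [NeZero d] (hM : IsAdmissibleShift d M) (W : Finset (Pt d))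
    (B : Set (Pt d)) (x : Pt d) :
    hitProb (W : Set (Pt d)) B x ≤ ∑ w ∈ W, superKernel M (x - w) := by
  have hpos := superKernel_nonneg (d := d) (zero_le_one.trans hM.one_le)
  refine hitProb_le_of_stepAvg_le (f := fun z => ∑ w ∈ W, superKernel M (z - w))
    (fun z => Finset.sum_nonneg fun w _ => hpos _) (fun w hw => ?_) (fun z => ?_) x
  · rw [← superKernel_zero (d := d) M, ← sub_self w]
    exact Finset.single_le_sum (f := fun v => superKernel M (w - v)) (fun v _ => hpos _)
      (Finset.mem_coe.1 hw)
  · rw [stepAvg_sum]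
    refine Finset.sum_le_sum fun w _ => ?_
    rw [stepAvg_comp_sub]
    exact hM.stepAvg_superKernel_le _

lemma hitProb_le_card_mul_rpow [NeZero d] (hd : 3 ≤ d) (hM : IsAdmissibleShift d M)
    {W : Finset (Pt d)} {x : Pt d} {s : ℝ} (hs : 0 < s) (hW : ∀ w ∈ W, s * M ≤ sqNorm (x - w))
    (B : Set (Pt d)) : hitProb (W : Set (Pt d)) B x ≤ W.card * s ^ (-decayExp d) := by
  refine (hitProb_le_sum_superKernel hM W B x).trans ?_
  rw [← nsmul_eq_mul]
  exact Finset.sum_le_card_nsmul _ _ _ fun w hw =>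
    superKernel_le_rpow hd (zero_lt_one.trans_le hM.one_le) hs (hW w hw)

end PotentialKernels

section KilledSuperharmonic

variable {d : ℕ}

/-- `g` is nonnegative and superharmonic for the walk killed on entering `W`. -/
structure IsKilledSuperharmonic (W : Set (Pt d)) (g : Pt d → ℝ) : Prop where
  nonneg : 0 ≤ g
  stepAvg_le (z : Pt d) : stepAvg (Wᶜ.indicator g) z ≤ g z

variable {W : Set (Pt d)} {g : Pt d → ℝ}

lemma isKilledSuperharmonic_hitProb [NeZero d] (W B : Set (Pt d)) :
    IsKilledSuperharmonic W (hitProb W B) where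
  nonneg _ := hitProb_nonneg
  stepAvg_le z := by
    conv_rhs => rw [← hitStep_hitProb, hitStep]
    refine stepAvg_mono fun q => ?_
    by_cases hq : z + step q ∈ W <;> simp [hq, indicator_one_nonneg]

lemma isKilledSuperharmonic_one_sub_hitProb [NeZero d] (W : Set (Pt d)) :
    IsKilledSuperharmonic W fun z => 1 - hitProb W Set.univ z where
  nonneg _ := sub_nonneg.2 hitProb_le_one
  stepAvg_le z := by
    rw [← congrFun (hitStep_hitProb W Set.univ) z, hitStep]
    conv_rhs => rw [← stepAvg_const 1 z, ← stepAvg_sub]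
    refine stepAvg_mono fun q => ?_
    by_cases hq : z + step q ∈ W <;> simp [hq]

namespace IsKilledSuperharmonic

variable (hg : IsKilledSuperharmonic W g)
include hg

lemma step_le {z : Pt d} {q : Fin d × Bool} (hq : z + step q ∉ W) :
    (2 * d : ℝ)⁻¹ * g (z + step q) ≤ g z := by
  have h := div_le_stepAvg (x := z) (fun v => Set.indicator_nonneg (fun _ _ => hg.nonneg _) v) q
    |>.trans (hg.stepAvg_le z)
  rwa [Set.indicator_of_mem hq, div_eq_inv_mul] at h

lemma pow_mul_le_of_ray {z : Pt d} {q : Fin d × Bool} {m : ℕ}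
    (hray : ∀ k, 1 ≤ k → k ≤ m → z + k • step q ∉ W) :
    (2 * d : ℝ)⁻¹ ^ m * g (z + m • step q) ≤ g z := by
  induction m with
  | zero => simp
  | succ m ih =>
    have hlast := hg.step_le (z := z + m • step q) (q := q)
    rw [add_assoc, ← succ_nsmul] at hlast
    calc (2 * d : ℝ)⁻¹ ^ (m + 1) * g (z + (m + 1) • step q)
        = (2 * d : ℝ)⁻¹ ^ m * ((2 * d : ℝ)⁻¹ * g (z + (m + 1) • step q)) := by ring
      _ ≤ (2 * d : ℝ)⁻¹ ^ m * g (z + m • step q) := by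
          gcongr
          exact hlast (hray (m + 1) (by lia) le_rfl)
      _ ≤ g z := ih fun k hk hkm => hray k hk (by lia)

lemma pow_mul_le_of_reverse_ray {z : Pt d} {q : Fin d × Bool} {m : ℕ}
    (hray : ∀ k < m, z + k • step q ∉ W) :
    (2 * d : ℝ)⁻¹ ^ m * g z ≤ g (z + m • step q) := by
  have hneg : step (q.1, !q.2) = -step q := by
    rcases q with ⟨i, _ | _⟩ <;> simp [step, ← Pi.single_neg]
  have hback (k : ℕ) (hk : k ≤ m) :
      z + m • step q + k • step (q.1, !q.2) = z + (m - k) • step q := by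
    rw [hneg, smul_neg, add_assoc, ← sub_nsmul _ hk]
  have h := hg.pow_mul_le_of_ray (z := z + m • step q) (q := (q.1, !q.2)) (m := m)
    fun k hk hkm => hback k hkm ▸ hray (m - k) (by lia)
  rwa [hback m le_rfl, Nat.sub_self, zero_nsmul, add_zero] at h

end IsKilledSuperharmonic

lemma exists_sqNorm_add_step_le {z : Pt d} (hz : z ≠ 0) :
    ∃ q, sqNorm (z + step q) + 1 ≤ sqNorm z := by
  obtain ⟨i, hi⟩ := Function.ne_iff.1 hz
  have hneg : ∃ q, along z q ≤ -1 := by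
    rcases lt_or_gt_of_ne hi with h | h
    · exact ⟨(i, true), by simpa [along] using mod_cast Int.le_sub_one_of_lt h⟩
    · exact ⟨(i, false), by simpa [along] using mod_cast Int.add_one_le_of_lt h⟩
  obtain ⟨q, hq⟩ := hneg
  exact ⟨q, by linarith [sqNorm_add_step z q]⟩

lemma IsKilledSuperharmonic.pow_mul_le_of_ball (hg : IsKilledSuperharmonic W g) {y : Pt d}
    {m : ℕ} : ∀ {z : Pt d}, sqNorm (z - y) ≤ m → (∀ w ∈ W, sqNorm (z - y) < sqNorm (w - y)) →
      (2 * d : ℝ)⁻¹ ^ m * g y ≤ g z := by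
  have hd : (2 * d : ℝ)⁻¹ ≤ 1 := by
    rcases Nat.eq_zero_or_pos d with rfl | h
    · simp
    · exact inv_le_one_of_one_le₀ (by have : (1 : ℝ) ≤ d := mod_cast h; linarith)
  induction m with
  | zero =>
    intro z hz _
    have hzy := sqNorm_eq_zero.1 (le_antisymm (by simpa using hz) (sqNorm_nonneg _))
    simp [sub_eq_zero.1 hzy]
  | succ m ih =>
    intro z hz hW
    rcases eq_or_ne (z - y) 0 with h0 | h0
    · rw [sub_eq_zero.1 h0]
      exact mul_le_of_le_one_left (hg.nonneg y) (pow_le_one₀ (by positivity) hd)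
    obtain ⟨q, hq⟩ := exists_sqNorm_add_step_le h0
    rw [sub_add_eq_add_sub] at hq
    push_cast at hz
    have hstep : z + step q ∉ W := fun h => by linarith [hW _ h]
    calc (2 * d : ℝ)⁻¹ ^ (m + 1) * g y = (2 * d : ℝ)⁻¹ * ((2 * d : ℝ)⁻¹ ^ m * g y) := by ring
      _ ≤ (2 * d : ℝ)⁻¹ * g (z + step q) := by
          gcongr
          exact ih (by linarith) fun w hw => by linarith [hW w hw]
      _ ≤ g z := hg.step_le hstep

lemma le_zero_of_le_stepAvg [NeZero d] {φ : Pt d → ℝ} (hfin : ∀ ε > 0, {z | ε ≤ φ z}.Finite)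
    (hsub : ∀ z, 0 < φ z → φ z ≤ stepAvg φ z) : φ ≤ 0 := by
  intro z
  by_contra! hz
  let q₀ : Fin d × Bool := (0, true)
  -- A maximum point which is extreme in direction `q₀` has a neighbour with a smaller value.
  obtain ⟨p, hp, hmax⟩ := Set.exists_max_image {w | φ z ≤ φ w} (fun w => toLex (φ w, w 0))
    (hfin _ hz) ⟨z, le_refl (φ z)⟩
  have hle (w) : φ w ≤ φ p := by
    rcases le_or_gt (φ z) (φ w) with h | h
    · rcases Prod.Lex.toLex_le_toLex.1 (hmax w h) with h | h
      exacts [h.le, h.1.le]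
    · exact h.le.trans hp
  have hlt : φ (p + step q₀) < φ p := by
    refine (hle _).lt_of_ne fun heq => ?_
    rcases Prod.Lex.toLex_le_toLex.1 (hmax (p + step q₀) (hp.trans_eq heq.symm)) with h | h
    · exact h.ne heq
    · simp [step, q₀] at h
  refine (hsub p (lt_of_lt_of_le hz hp)).not_gt ?_
  rw [← stepAvg_const (φ p) p]
  have hd : (0 : ℝ) < 2 * d := by have := NeZero.pos d; positivity
  exact div_lt_div_of_pos_right
    (Finset.sum_lt_sum (fun q _ => hle _) ⟨q₀, Finset.mem_univ _, hlt⟩) hd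

lemma IsKilledSuperharmonic.le_of_le_stepAvg [NeZero d] (hg : IsKilledSuperharmonic W g)
    {h : Pt d → ℝ} (hfin : ∀ ε > 0, {z | ε ≤ h z}.Finite) (hW : ∀ w ∈ W, h w ≤ 0)
    (hsub : ∀ z ∉ W, h z ≤ g z ∨ h z ≤ stepAvg h z) {x : Pt d} (hx : x ∉ W) : h x ≤ g x := by
  have hφ : Wᶜ.indicator (fun z => h z - g z) ≤ 0 := by
    refine le_zero_of_le_stepAvg (fun ε hε => (hfin ε hε).subset fun z hz => ?_) fun z hz => ?_
    · have hz : ε ≤ Wᶜ.indicator (fun z => h z - g z) z := hz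
      have hzW : z ∉ W := fun hzW => by simp [hzW, hε.not_ge] at hz
      rw [Set.indicator_of_mem (Set.mem_compl hzW)] at hz
      exact hz.trans (sub_le_self _ (hg.nonneg z))
    · have hzW : z ∉ W := fun hzW => by simp [hzW] at hz
      rw [Set.indicator_of_mem (Set.mem_compl hzW)] at hz ⊢
      calc h z - g z ≤ stepAvg h z - stepAvg (Wᶜ.indicator g) z :=
            sub_le_sub ((hsub z hzW).resolve_left (by linarith)) (hg.stepAvg_le z)
        _ ≤ stepAvg (Wᶜ.indicator fun z => h z - g z) z := by
            rw [← stepAvg_sub]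
            exact stepAvg_mono fun q => by by_cases hq : z + step q ∈ W <;> simp [hq, hW]
  have := hφ x
  rw [Set.indicator_of_mem (Set.mem_compl hx)] at this
  exact sub_nonpos.1 this

lemma finite_setOf_sqNorm_sub_le (y : Pt d) (r : ℝ) : {z | sqNorm (z - y) ≤ r}.Finite := by
  refine (Set.finite_Icc (y - fun _ => ⌈r⌉) (y + fun _ => ⌈r⌉)).subset fun z hz => ?_
  have hcoord (i) : |z i - y i| ≤ ⌈r⌉ := by
    have hsq : |z i - y i| ≤ (z i - y i) ^ 2 := (Int.le_self_sq _).trans_eq (sq_abs _)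
    have hr : (((z i - y i) ^ 2 : ℤ) : ℝ) ≤ ⌈r⌉ :=
      mod_cast ((sq_le_sqNorm (z - y) i).trans hz).trans (Int.le_ceil r)
    exact hsq.trans (mod_cast hr)
  constructor <;> intro i <;> have := abs_le.1 (hcoord i) <;> simp <;> lia

lemma finite_setOf_le_subKernel_sub (hd : 3 ≤ d) {M ε : ℝ} (hM : 0 < M) (hε : 0 < ε) (y : Pt d) :
    {z | ε ≤ subKernel M (z - y)}.Finite := by
  refine (finite_setOf_sqNorm_sub_le y ((ε ^ (-decayExp d)⁻¹ + 1) * M)).subset fun z hz => ?_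
  have hmax := (Real.le_rpow_inv_iff_of_neg (lt_max_of_lt_right one_pos) hε
    (neg_lt_zero.2 (decayExp_pos hd))).2 hz
  exact (div_le_iff₀ hM).1 (by linarith [(le_max_left _ _).trans hmax])

/-- Comparison with `z ↦ subKernel M (z - y)`, corrected by multiples of the kernels centred on `W`
to make it nonpositive there. -/
lemma IsKilledSuperharmonic.barrier_le {W : Finset (Pt d)} (hd : 3 ≤ d) {M : ℝ}
    (hM : IsAdmissibleShift d M) (hg : IsKilledSuperharmonic (W : Set (Pt d)) g) {y : Pt d} {c : ℝ}
    (hc : 0 < c) (hball : ∀ z ∉ W, sqNorm (z - y) < 6 * M → c ≤ g z) {x : Pt d} (hx : x ∉ W) :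
    c * (subKernel M (x - y) - ∑ w ∈ W, subKernel M (w - y) * superKernel M (x - w)) ≤ g x := by
  have : NeZero d := ⟨by lia⟩
  have hM0 : 0 < M := zero_lt_one.trans_le hM.one_le
  have hsum (z) (V : Finset (Pt d)) : 0 ≤ ∑ w ∈ V, subKernel M (w - y) * superKernel M (z - w) :=
    Finset.sum_nonneg fun w _ => mul_nonneg (subKernel_nonneg M _) (superKernel_nonneg hM0.le _)
  refine hg.le_of_le_stepAvg
    (h := fun z => c * (subKernel M (z - y) - ∑ w ∈ W, subKernel M (w - y) * superKernel M (z - w)))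
    (fun ε hε => ?_) (fun w hw => ?_) (fun z hz => ?_) hx
  · refine (finite_setOf_le_subKernel_sub hd hM0 (div_pos hε hc) y).subset fun z hz => ?_
    exact (div_le_iff₀' hc).2 (hz.trans (by gcongr; linarith [hsum z W]))
  · rw [← Finset.add_sum_erase _ _ (Finset.mem_coe.1 hw), sub_self, superKernel_zero]
    exact mul_nonpos_of_nonneg_of_nonpos hc.le (by linarith [hsum w (W.erase w)])
  · rcases lt_or_ge (sqNorm (z - y)) (6 * M) with hzy | hzy
    · refine Or.inl (le_trans ?_ (hball z hz hzy))
      nlinarith [hsum z W, subKernel_le_one hd M (z - y)]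
    · right
      simp only [stepAvg_const_mul, stepAvg_sub, stepAvg_sum, stepAvg_comp_sub]
      gcongr with w
      · exact hM.subKernel_le_stepAvg hzy
      · exact subKernel_nonneg M _
      · exact hM.stepAvg_superKernel_le _

lemma subKernel_mul_superKernel_le (hd : 3 ≤ d) {M κ : ℝ} (hM : 0 < M) (hκ : 1 ≤ κ) {x w y : Pt d}
    (hx : 8 * κ * M ≤ sqNorm (x - w)) (hy : 8 * κ * M ≤ sqNorm (w - y)) :
    subKernel M (w - y) * superKernel M (x - w) ≤ κ ^ (-decayExp d) * superKernel M (x - y) := by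
  have htriangle : sqNorm (x - y) / M ≤ 2 * (sqNorm (x - w) / M) + 2 * (sqNorm (w - y) / M) := by
    rw [div_le_iff₀ hM, add_mul, mul_assoc, mul_assoc, div_mul_cancel₀ _ hM.ne',
      div_mul_cancel₀ _ hM.ne']
    simpa using sqNorm_add_le (x - w) (w - y)
  rw [← le_div_iff₀ hM] at hx hy
  have ht : 0 ≤ sqNorm (x - y) / M := div_nonneg (sqNorm_nonneg _) hM.le
  rw [subKernel, max_eq_left (by linarith), superKernel, superKernel,
    ← Real.mul_rpow (by linarith) (by linarith), ← Real.mul_rpow (by linarith) (by linarith)]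
  refine Real.rpow_le_rpow_of_nonpos (by positivity) ?_ (neg_nonpos.2 (decayExp_pos hd).le)
  nlinarith [mul_le_mul_of_nonneg_left htriangle (zero_le_one.trans hκ)]

lemma IsKilledSuperharmonic.half_mul_superKernel_le {W : Finset (Pt d)} (hd : 3 ≤ d) {M κ : ℝ}
    (hM : IsAdmissibleShift d M) (hκ : 1 ≤ κ) (hWκ : W.card * κ ^ (-decayExp d) ≤ 1 / 2)
    (hg : IsKilledSuperharmonic (W : Set (Pt d)) g) {x y : Pt d} {c : ℝ} (hc : 0 < c)
    (hball : ∀ z ∉ W, sqNorm (z - y) < 6 * M → c ≤ g z)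
    (hx : ∀ w ∈ W, 8 * κ * M ≤ sqNorm (x - w)) (hy : ∀ w ∈ W, 8 * κ * M ≤ sqNorm (w - y)) :
    c / 2 * superKernel M (x - y) ≤ g x := by
  have hM0 : 0 < M := zero_lt_one.trans_le hM.one_le
  have hxW : x ∉ W := fun h => by
    have := hx x h
    rw [sub_self, sqNorm_eq_zero.2 rfl] at this
    nlinarith
  have hsum : ∑ w ∈ W, subKernel M (w - y) * superKernel M (x - w) ≤
      W.card * (κ ^ (-decayExp d) * superKernel M (x - y)) := by
    rw [← nsmul_eq_mul]
    exact Finset.sum_le_card_nsmul _ _ _ fun w hw =>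
      subKernel_mul_superKernel_le hd hM0 hκ (hx w hw) (hy w hw)
  refine le_trans ?_ (hg.barrier_le hd hM hc hball hxW)
  rw [div_mul_eq_mul_div, mul_div_assoc]
  gcongr
  nlinarith [superKernel_le_subKernel hd hM0 (x - y), superKernel_nonneg hM0.le (x - y)]

lemma eq_of_sqNorm_lt_two_mul_along_sq {z : Pt d} {q q' : Fin d × Bool} (hq : along z q < 0)
    (hzq : sqNorm z < 2 * along z q ^ 2) (hq' : along z q' < 0)
    (hzq' : sqNorm z < 2 * along z q' ^ 2) : q = q' := by
  have hfst : q.1 = q'.1 := by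
    by_contra hne
    have hpair : (z q.1 : ℝ) ^ 2 + (z q'.1 : ℝ) ^ 2 ≤ sqNorm z := by
      rw [sqNorm, ← Finset.sum_pair (f := fun i => (z i : ℝ) ^ 2) hne]
      exact Finset.sum_le_univ_sum_of_nonneg fun i => sq_nonneg _
    have hsq (p : Fin d × Bool) : along z p ^ 2 = (z p.1 : ℝ) ^ 2 := by
      unfold along; split_ifs <;> ring
    rw [hsq] at hzq hzq'
    linarith
  obtain ⟨i, s⟩ := q
  obtain ⟨j, s'⟩ := q'
  obtain rfl : i = j := hfst
  cases s <;> cases s' <;> simp only [along] at hq hq' ⊢ <;> norm_num at hq hq' ⊢ <;> linarith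

lemma half_sq_le_sqNorm_add_smul_step {z : Pt d} {q : Fin d × Bool}
    (h : along z q < 0 → 2 * along z q ^ 2 ≤ sqNorm z) (k : ℕ) :
    (k : ℝ) ^ 2 / 2 ≤ sqNorm (z + k • step q) := by
  rw [sqNorm_add_smul_step]
  rcases lt_or_ge (along z q) 0 with hq | hq
  · nlinarith [h hq, sq_nonneg ((k : ℝ) + 2 * along z q)]
  · nlinarith [sqNorm_nonneg z, mul_nonneg k.cast_nonneg (α := ℝ) hq]

/-- A ray from `x` comes close to a given point only if it points in the dominant direction towards
it, so fewer than `2 * d` points cannot block all rays. -/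
lemma exists_half_sq_le_sqNorm_ray_sub {B : Finset (Pt d)} (hB : B.card < 2 * d) (x : Pt d) :
    ∃ q, ∀ a ∈ B, ∀ k : ℕ, (k : ℝ) ^ 2 / 2 ≤ sqNorm (x + k • step q - a) := by
  by_contra! hblocked
  have hblocked (q : Fin d × Bool) :
      ∃ a ∈ B, along (x - a) q < 0 ∧ sqNorm (x - a) < 2 * along (x - a) q ^ 2 := by
    obtain ⟨a, ha, k, hk⟩ := hblocked q
    refine ⟨a, ha, ?_⟩
    by_contra! h
    rw [← sub_add_eq_add_sub] at hk
    exact hk.not_ge (half_sq_le_sqNorm_add_smul_step h k)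
  choose a haB hneg hlt using hblocked
  have hinj : Function.Injective a := fun q q' h =>
    eq_of_sqNorm_lt_two_mul_along_sq (hneg q) (hlt q) (h ▸ hneg q') (h ▸ hlt q')
  have hcard := Finset.card_le_card_of_injOn (s := Finset.univ) a (fun q _ => haB q) hinj.injOn
  simp only [Finset.card_univ, Fintype.card_prod, Fintype.card_fin, Fintype.card_bool] at hcard
  lia

lemma exists_mul_rpow_neg_decayExp_le (hd : 3 ≤ d) {N ε : ℝ} (hε : 0 < ε) :
    ∃ κ, 1 ≤ κ ∧ N * κ ^ (-decayExp d) ≤ ε := by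
  have htendsto := (tendsto_rpow_neg_atTop (decayExp_pos hd)).const_mul N
  rw [mul_zero] at htendsto
  exact ((Filter.eventually_ge_atTop 1).and (htendsto.eventually_le_const hε)).exists

lemma exists_le_half_sq (r : ℝ) : ∃ R : ℕ, r ≤ (R : ℝ) ^ 2 / 2 := by
  obtain ⟨R, hR⟩ := exists_nat_ge (max (2 * r) 1)
  refine ⟨R, ?_⟩
  nlinarith [(le_max_left (2 * r) 1).trans hR, (le_max_right (2 * r) 1).trans hR]

lemma exists_pos_le_esc (hd : 3 ≤ d) : ∃ c > 0, ∀ (A : Finset (Pt d)) (x : Pt d), x ∈ A →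
    A.card ≤ 2 * d → c ≤ esc d A x := by
  have : NeZero d := ⟨by lia⟩
  obtain ⟨M, hM⟩ := exists_isAdmissibleShift hd
  obtain ⟨κ, hκ, hdκ⟩ := exists_mul_rpow_neg_decayExp_le hd (N := 2 * d) one_half_pos
  obtain ⟨R, hR⟩ := exists_le_half_sq (κ * M)
  refine ⟨(2 * d : ℝ)⁻¹ ^ R * (1 / 2), by have := NeZero.pos d; positivity, fun A x hx hA => ?_⟩
  obtain ⟨q, hq⟩ := exists_half_sq_le_sqNorm_ray_sub (B := A.erase x)
    (by have := Finset.card_erase_lt_of_mem hx; lia) x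
  have hfar (a) (ha : a ∈ A) (k : ℕ) : (k : ℝ) ^ 2 / 2 ≤ sqNorm (x + k • step q - a) := by
    rcases eq_or_ne a x with rfl | hax
    · rw [← sub_add_eq_add_sub]
      exact half_sq_le_sqNorm_add_smul_step (by simp [along]) k
    · exact hq a (Finset.mem_erase.2 ⟨hax, ha⟩) k
  rw [esc_eq_one_sub_hitProb (Finset.mem_coe.2 hx)]
  refine le_trans ?_ ((isKilledSuperharmonic_one_sub_hitProb (A : Set (Pt d))).pow_mul_le_of_ray
    (q := q) (m := R) fun k hk _ hmem => ?_)
  · have hhit := hitProb_le_card_mul_rpow hd hM (W := A) (x := x + R • step q) (s := κ)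
      (by linarith) (fun a ha => hR.trans (hfar a ha R)) Set.univ
    have hcard : (A.card : ℝ) * κ ^ (-decayExp d) ≤ 2 * d * κ ^ (-decayExp d) := by
      gcongr
      exact_mod_cast hA
    gcongr
    linarith
  · have hk0 : (0 : ℝ) < (k : ℝ) ^ 2 / 2 := by positivity
    have := hfar _ hmem k
    rw [sub_self, sqNorm_eq_zero.2 rfl] at this
    linarith

lemma exists_far_comparison_point {W : Finset (Pt d)} (hW : W.card < 2 * d) {x : Pt d} (hx : x ∉ W)
    (R : ℕ) : ∃ x', sqNorm (x' - x) = (R : ℝ) ^ 2 ∧ (∀ w ∈ W, (R : ℝ) ^ 2 / 2 ≤ sqNorm (x' - w)) ∧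
      ∀ g, IsKilledSuperharmonic (W : Set (Pt d)) g →
        (2 * d : ℝ)⁻¹ ^ R * g x' ≤ g x ∧ (2 * d : ℝ)⁻¹ ^ R * g x ≤ g x' := by
  obtain ⟨q, hq⟩ := exists_half_sq_le_sqNorm_ray_sub hW x
  have hray (k : ℕ) : x + k • step q ∉ (W : Set (Pt d)) := fun hmem => by
    rcases Nat.eq_zero_or_pos k with rfl | hk
    · simp [hx] at hmem
    · have hk0 : (0 : ℝ) < (k : ℝ) ^ 2 / 2 := by positivity
      have := hq _ hmem k
      rw [sub_self, sqNorm_eq_zero.2 rfl] at this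
      linarith
  refine ⟨x + R • step q, ?_, fun w hw => hq w hw R, fun g hg =>
    ⟨hg.pow_mul_le_of_ray fun k _ _ => hray k, hg.pow_mul_le_of_reverse_ray fun k _ => hray k⟩⟩
  rw [add_sub_cancel_left, ← zero_add (R • step q), sqNorm_add_smul_step]
  simp [sqNorm, along]

lemma sqNorm_sub_add_one_le_of_displaced {x y x' y' : Pt d} {R : ℝ} (hx : sqNorm (x' - x) = R ^ 2)
    (hy : sqNorm (y' - y) = R ^ 2) :
    sqNorm (x' - y') + 1 ≤ (8 * R ^ 2 + 2) * (1 + sqNorm (x - y)) := by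
  have h₁ := sqNorm_add_le (x - y) (x' - x + (y - y'))
  have h₂ := sqNorm_add_le (x' - x) (y - y')
  rw [show x - y + (x' - x + (y - y')) = x' - y' by abel] at h₁
  rw [sqNorm_sub_comm y, hx, hy] at h₂
  nlinarith [mul_nonneg (sq_nonneg R) (sqNorm_nonneg (x - y)), sqNorm_nonneg (x - y)]

lemma mul_rpow_le_superKernel (hd : 3 ≤ d) {M L N : ℝ} (hM : 1 ≤ M) (hL : 0 ≤ L) (hN : 0 ≤ N)
    {z : Pt d} (hz : sqNorm z + 1 ≤ L * (1 + N)) :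
    L ^ (-decayExp d) * (1 + N) ^ (-decayExp d) ≤ superKernel M z := by
  rw [← Real.mul_rpow hL (by linarith)]
  have hzM := div_nonneg (sqNorm_nonneg z) (zero_le_one.trans hM)
  refine Real.rpow_le_rpow_of_nonpos (by linarith) ?_ (neg_nonpos.2 (decayExp_pos hd).le)
  exact le_trans (by gcongr; exact div_le_self (sqNorm_nonneg z) hM) hz

/-- The Harnack inequality needed is only polynomial: `g` is compared at points `x'`, `y'` far from
`W`, where the obstacle costs at most half of the potential kernel centred at `y'`. -/
lemma exists_pos_forall_rpow_mul_le (hd : 3 ≤ d) : ∃ c > 0, ∀ (W : Finset (Pt d)) (g : Pt d → ℝ),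
    W.card < 2 * d → IsKilledSuperharmonic (W : Set (Pt d)) g → ∀ x ∉ W, ∀ y ∉ W,
      c * (1 + sqNorm (x - y)) ^ (-decayExp d) * g y ≤ g x := by
  obtain ⟨M, hM⟩ := exists_isAdmissibleShift hd
  have hM0 : 0 < M := zero_lt_one.trans_le hM.one_le
  obtain ⟨κ, hκ, hdκ⟩ := exists_mul_rpow_neg_decayExp_le hd (N := 2 * d) one_half_pos
  obtain ⟨R, hR⟩ := exists_le_half_sq (8 * κ * M)
  obtain ⟨m, hm⟩ := exists_nat_ge (6 * M)
  set p : ℝ := (2 * d : ℝ)⁻¹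
  set L : ℝ := 8 * (R : ℝ) ^ 2 + 2
  have : 0 < p := inv_pos.2 (mul_pos two_pos (Nat.cast_pos.2 (by lia)))
  have hL : 0 < L := by positivity
  refine ⟨p ^ R * (p ^ m * p ^ R / 2 * L ^ (-decayExp d)), by positivity,
    fun W g hW hg x hx y hy => ?_⟩
  rcases eq_or_lt_of_le (show 0 ≤ g y from hg.nonneg y) with hgy | hgy
  · rw [← hgy, mul_zero]
    exact hg.nonneg x
  obtain ⟨x', hxx', hx'W, hgx⟩ := exists_far_comparison_point hW hx R
  obtain ⟨y', hyy', hy'W, hgy'⟩ := exists_far_comparison_point hW hy R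
  have hWκ : W.card * κ ^ (-decayExp d) ≤ 1 / 2 :=
    le_trans (by gcongr; exact_mod_cast hW.le) hdκ
  have hx'y' : sqNorm (x' - y') + 1 ≤ L * (1 + sqNorm (x - y)) :=
    sqNorm_sub_add_one_le_of_displaced hxx' hyy'
  have hx' : p ^ m * (p ^ R * g y) / 2 * superKernel M (x' - y') ≤ g x' := by
    refine hg.half_mul_superKernel_le hd hM hκ hWκ (by positivity) (fun z _ hzy => ?_)
      (fun w hw => hR.trans (hx'W w hw))
      (fun w hw => hR.trans ((hy'W w hw).trans_eq (sqNorm_sub_comm _ _)))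
    refine le_trans (by gcongr; exact (hgy' g hg).2)
      (hg.pow_mul_le_of_ball (hzy.le.trans hm) fun w hw => ?_)
    nlinarith [hR.trans (hy'W w hw), sqNorm_sub_comm y' w]
  calc p ^ R * (p ^ m * p ^ R / 2 * L ^ (-decayExp d)) * (1 + sqNorm (x - y)) ^ (-decayExp d) * g y
      = p ^ R * (p ^ m * (p ^ R * g y) / 2 *
          (L ^ (-decayExp d) * (1 + sqNorm (x - y)) ^ (-decayExp d))) := by ring
    _ ≤ p ^ R * (p ^ m * (p ^ R * g y) / 2 * superKernel M (x' - y')) := by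
        gcongr
        exact mul_rpow_le_superKernel hd hM.one_le hL.le (sqNorm_nonneg _) hx'y'
    _ ≤ p ^ R * g x' := by gcongr
    _ ≤ g x := (hgx g hg).1

lemma exists_pos_mul_rpow_le_hitProb (hd : 3 ≤ d) : ∃ c > 0, ∀ (W : Finset (Pt d)) (x y : Pt d),
    W.card < 2 * d → x ∉ W → y ∉ W → (∃ q, y + step q ∈ W) →
      c * (1 + sqNorm (x - y)) ^ (-decayExp d) ≤ hitProb (W : Set (Pt d)) {y} x := by
  have : NeZero d := ⟨by lia⟩
  obtain ⟨c, hc, hcomparison⟩ := exists_pos_forall_rpow_mul_le hd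
  refine ⟨c * (2 * d : ℝ)⁻¹, by have := NeZero.pos d; positivity, fun W x y hW hx hy ⟨q, hq⟩ => ?_⟩
  have hy1 : (2 * d : ℝ)⁻¹ ≤ hitProb (W : Set (Pt d)) {y} y := by
    rw [← hitStep_hitProb, hitStep, ← one_div]
    refine le_trans (by simp [hq]) (div_le_stepAvg (fun z => ?_) q)
    split_ifs
    exacts [indicator_one_nonneg, hitProb_nonneg]
  calc _ = c * (1 + sqNorm (x - y)) ^ (-decayExp d) * (2 * d : ℝ)⁻¹ := by ring
    _ ≤ _ := by have := sqNorm_nonneg (x - y); gcongr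
    _ ≤ _ := hcomparison W _ hW (isKilledSuperharmonic_hitProb _ _) x hx y hy

end KilledSuperharmonic

section Perturbation

lemma one_sub_add_mul_mul_le_mul {a a' b b' s t : ℝ} (ha : 0 ≤ a) (hb : 0 ≤ b) (ha' : 0 ≤ a')
    (hb' : 0 ≤ b') (hs : 0 ≤ s) (ht : 0 ≤ t) (haa' : (1 - s) * a ≤ a') (hbb' : (1 - t) * b ≤ b') :
    (1 - (s + t)) * (a * b) ≤ a' * b' := by
  rcases le_total 1 (s + t) with hst | hst
  · exact (mul_nonpos_of_nonpos_of_nonneg (by linarith) (mul_nonneg ha hb)).trans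
      (mul_nonneg ha' hb')
  · calc (1 - (s + t)) * (a * b) ≤ (1 - s) * (1 - t) * (a * b) := by
          gcongr
          nlinarith [mul_nonneg hs ht]
      _ = (1 - s) * a * ((1 - t) * b) := by ring
      _ ≤ a' * b' := by
          gcongr
          exact mul_nonneg (by linarith) hb

lemma one_sub_add_mul_div_le_div {a a' b b' s t : ℝ} (ha : 0 ≤ a) (hb : 0 ≤ b) (ha' : 0 ≤ a')
    (hab' : a' ≤ b') (hs : 0 ≤ s) (ht : 0 ≤ t) (haa' : (1 - s) * a ≤ a') (hbb' : b' ≤ (1 + t) * b) :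
    (1 - (s + t)) * (a / b) ≤ a' / b' := by
  rcases (ha'.trans hab').eq_or_lt with hb' | hb'
  · have hs1 : (1 - (s + t)) * a ≤ 0 := by nlinarith [mul_nonneg ht ha]
    rw [← hb', div_zero, ← mul_div_assoc]
    exact div_nonpos_of_nonpos_of_nonneg hs1 hb
  have hb0 : 0 < b := hb.lt_of_ne (by rintro rfl; linarith)
  rw [div_eq_mul_inv, div_eq_mul_inv]
  refine one_sub_add_mul_mul_le_mul ha (inv_nonneg.2 hb) ha' (inv_nonneg.2 hb'.le) hs ht haa' ?_
  rw [← div_eq_mul_inv, div_le_iff₀ hb0, inv_mul_eq_div, le_div_iff₀ hb']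
  rcases le_total t 1 with ht1 | ht1
  · nlinarith [mul_le_mul_of_nonneg_left hbb' (sub_nonneg.2 ht1), mul_nonneg (sq_nonneg t) hb]
  · nlinarith

lemma exists_log_sq_rpow_le {α δ : ℝ} (hα : 0 < α) (hδ : 0 < δ) (b : ℝ) : ∃ C > 0, ∀ r ≥ 1,
    (3 + 2 * (b * Real.log r) ^ 2) ^ α ≤ C * r ^ δ := by
  set ε := δ / (2 * α)
  have hε : 0 < ε := by positivity
  refine ⟨(3 + 2 * (b / ε) ^ 2) ^ α, by positivity, fun r hr => ?_⟩
  have hr0 : 0 < r := zero_lt_one.trans_le hr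
  have hone : 1 ≤ (r ^ ε) ^ 2 := one_le_pow₀ (Real.one_le_rpow hr hε.le)
  have hlog : (b * Real.log r) ^ 2 ≤ (b / ε) ^ 2 * (r ^ ε) ^ 2 := by
    rw [← mul_pow, div_mul_eq_mul_div, mul_div_assoc, mul_pow, mul_pow]
    gcongr
    exacts [Real.log_nonneg hr, Real.log_le_rpow_div hr0.le hε]
  calc (3 + 2 * (b * Real.log r) ^ 2) ^ α
      ≤ ((3 + 2 * (b / ε) ^ 2) * (r ^ ε) ^ 2) ^ α := by gcongr; nlinarith
    _ = (3 + 2 * (b / ε) ^ 2) ^ α * r ^ δ := by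
        rw [Real.mul_rpow (by positivity) (by positivity), ← Real.rpow_mul_natCast hr0.le,
          ← Real.rpow_mul hr0.le]
        congr 2
        simp only [ε]
        field_simp
        norm_num

end Perturbation

section HittingEstimates

variable {d : ℕ}

lemma exists_hitProb_le_mul_rpow (hd : 3 ≤ d) (n : ℕ) : ∃ D > 0, ∀ W : Finset (Pt d), W.card ≤ n →
    ∀ r > 0, ∀ x, (∀ w ∈ W, r ^ 2 ≤ sqNorm (x - w)) →
      ∀ B, hitProb (W : Set (Pt d)) B x ≤ D * r ^ (2 - d : ℝ) := by
  have : NeZero d := ⟨by lia⟩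
  obtain ⟨M, hM⟩ := exists_isAdmissibleShift hd
  have hM0 : 0 < M := zero_lt_one.trans_le hM.one_le
  refine ⟨(n + 1) * M ^ decayExp d, by positivity, fun W hW r hr x hx B => ?_⟩
  have hscale : (r ^ 2 / M) ^ (-decayExp d) = M ^ decayExp d * r ^ (2 - d : ℝ) := by
    rw [Real.div_rpow (by positivity) hM0.le, Real.rpow_neg hM0.le, div_inv_eq_mul, mul_comm,
      ← Real.rpow_natCast_mul hr.le]
    congr 2
    simp only [decayExp]
    push_cast
    ring
  refine (hitProb_le_card_mul_rpow hd hM (s := r ^ 2 / M) (by positivity)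
    (fun w hw => by rw [div_mul_cancel₀ _ hM0.ne']; exact hx w hw) B).trans ?_
  rw [hscale, mul_assoc]
  gcongr
  have : (W.card : ℝ) ≤ n := mod_cast hW
  linarith

lemma exists_rpow_le_hitProb (hd : 3 ≤ d) {δ : ℝ} (hδ : 0 < δ) (b : ℝ) : ∃ c > 0,
    ∀ (W : Finset (Pt d)) (x y : Pt d), W.card < 2 * d → x ∉ W → ∀ r ≥ 1,
      (∀ w ∈ W, sqNorm (x - w) ≤ (b * Real.log r) ^ 2) → hitProb (W : Set (Pt d)) {y} x ≠ 0 →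
        c * r ^ (-δ) ≤ hitProb (W : Set (Pt d)) {y} x := by
  have : NeZero d := ⟨by lia⟩
  obtain ⟨c, hc, hlower⟩ := exists_pos_mul_rpow_le_hitProb hd
  obtain ⟨C, hC, hlog⟩ := exists_log_sq_rpow_le (decayExp_pos hd) hδ b
  refine ⟨c * C⁻¹, by positivity, fun W x y hW hx r hr hWr hne => ?_⟩
  have hr0 : 0 < r := zero_lt_one.trans_le hr
  obtain ⟨hy, q, hq⟩ := exists_step_mem_of_hitProb_ne_zero (Finset.mem_coe.not.2 hx) hne
  have hxy0 := sqNorm_nonneg (x - y)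
  have hxy : 1 + sqNorm (x - y) ≤ 3 + 2 * (b * Real.log r) ^ 2 := by
    have h := sqNorm_add_le (x - (y + step q)) (step q)
    rw [sub_add_eq_sub_sub, sub_add_cancel, ← sub_add_eq_sub_sub, sqNorm_step] at h
    linarith [hWr _ hq]
  have hpow : (1 + sqNorm (x - y)) ^ decayExp d ≤ C * r ^ δ :=
    (Real.rpow_le_rpow (by positivity) hxy (decayExp_pos hd).le).trans (hlog r hr)
  calc c * C⁻¹ * r ^ (-δ) = c * (C * r ^ δ)⁻¹ := by
        rw [Real.rpow_neg hr0.le, mul_inv, mul_assoc]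
    _ ≤ c * (1 + sqNorm (x - y)) ^ (-decayExp d) := by
        rw [Real.rpow_neg (by positivity)]
        gcongr
    _ ≤ hitProb (W : Set (Pt d)) {y} x := hlower W x y hW hx hy ⟨q, hq⟩

end HittingEstimates

section UnionComparison

variable {d : ℕ} {W V B : Set (Pt d)} {x y : Pt d}

lemma esc_le_esc_of_subset [NeZero d] (h : W ⊆ V) (hx : x ∈ W) : esc d V x ≤ esc d W x := by
  rw [esc_eq_one_sub_hitProb hx, esc_eq_one_sub_hitProb (h hx)]
  exact sub_le_sub_left (hitProb_univ_mono h) 1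

lemma esc_sub_le_esc_union [NeZero d] (hx : x ∈ W) :
    esc d W x - hitProb V Set.univ x ≤ esc d (W ∪ V) x := by
  rw [esc_eq_one_sub_hitProb hx, esc_eq_one_sub_hitProb (Or.inl hx)]
  linarith [hitProb_union_univ_le (W := W) (V := V) (x := x)]

lemma transP_eq (W : Set (Pt d)) (x y : Pt d) :
    transP d W x y = hitProb W {y} x / hitProb W Set.univ x := by
  rw [transP, hitFrom_eq_hitProb, retProb_eq_hitProb]

lemma transP_nonneg (W : Set (Pt d)) (x y : Pt d) : 0 ≤ transP d W x y := by
  rw [transP_eq]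
  exact div_nonneg hitProb_nonneg hitProb_nonneg

/-- A walk from `x` that hits `V` before `W` must first travel to `V` and then back to `W`, which
costs two factors `η`. -/
lemma one_sub_mul_transP_le_transP_union [NeZero d] {η κ : ℝ} (hη : 0 ≤ η)
    (hxV : hitProb V Set.univ x ≤ η) (hVW : ∀ v ∈ V, hitProb W {y} v ≤ η) (hκ : 0 < κ)
    (hxW : κ ≤ hitProb W {y} x) :
    (1 - (η ^ 2 / κ + η / κ)) * transP d W x y ≤ transP d (W ∪ V) x y := by
  have hbound {s : ℝ} (hs : 0 ≤ s) {p : ℝ} (hp : κ ≤ p) : s ≤ s / κ * p := by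
    rw [div_mul_eq_mul_div, le_div_iff₀ hκ]
    gcongr
  rw [transP_eq, transP_eq]
  refine one_sub_add_mul_div_le_div hitProb_nonneg hitProb_nonneg hitProb_nonneg
    hitProb_le_hitProb_univ (by positivity) (by positivity) ?_ ?_
  · have hunion := hitProb_le_hitProb_union_add (x := x) hη hVW
    linarith [hbound (sq_nonneg η) hxW, mul_le_mul_of_nonneg_left hxV hη]
  · have hunion := hitProb_union_univ_le (W := W) (V := V) (x := x)
    linarith [hbound hη (hxW.trans hitProb_le_hitProb_univ)]

end UnionComparison

section Clusterings

variable {d k : ℕ}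

lemma mem_others {C : Fin k → Finset (Pt d)} {i : Fin k} {v : Pt d} :
    v ∈ others d C i ↔ ∃ j ≠ i, v ∈ C j := by
  simp only [others, Finset.mem_biUnion, Finset.mem_univ, true_and]
  refine exists_congr fun j => ?_
  split_ifs with h <;> simp [h]

variable {E : ClusteringS d}

lemma subset_confOf (i : Fin E.1) : E.2 i ⊆ confOf d E :=
  Finset.subset_biUnion_of_mem E.2 (Finset.mem_univ i)

lemma others_subset_confOf (i : Fin E.1) : others d E.2 i ⊆ confOf d E := fun _ hv =>
  let ⟨j, _, hj⟩ := mem_others.1 hv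
  subset_confOf j hj

lemma coe_confOf_eq_union (i : Fin E.1) :
    (confOf d E : Set (Pt d)) = (E.2 i : Set (Pt d)) ∪ others d E.2 i := by
  rw [← Finset.coe_union, Finset.coe_inj]
  refine Finset.Subset.antisymm (fun v hv => ?_)
    (Finset.union_subset (subset_confOf i) (others_subset_confOf i))
  obtain ⟨j, -, hj⟩ := Finset.mem_biUnion.1 hv
  rcases eq_or_ne j i with rfl | hji
  · exact Finset.mem_union_left _ hj
  · exact Finset.mem_union_right _ (mem_others.2 ⟨j, hji, hj⟩)

lemma coe_confOf_diff_singleton (hE : ∀ i j, i ≠ j → Disjoint (E.2 i) (E.2 j)) {i : Fin E.1}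
    {x : Pt d} (hx : x ∈ E.2 i) :
    (confOf d E : Set (Pt d)) \ {x} = (E.2 i : Set (Pt d)) \ {x} ∪ others d E.2 i := by
  have hxo : x ∉ (others d E.2 i : Set (Pt d)) := fun h =>
    let ⟨j, hji, hj⟩ := mem_others.1 h
    Finset.disjoint_left.1 (hE j i hji) hj hx
  rw [coe_confOf_eq_union i, Set.union_sdiff_distrib, Set.sdiff_singleton_eq_self hxo]

lemma capa_coe (A : Finset (Pt d)) : capa d A = ∑ x ∈ A, esc d A x :=
  Finset.tsum_subtype' A (esc d A)

lemma capa_nonneg [NeZero d] (A : Finset (Pt d)) : 0 ≤ capa d A := by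
  rw [capa_coe]
  exact Finset.sum_nonneg fun _ _ => esc_nonneg

lemma capS_nonneg [NeZero d] (E : ClusteringS d) : 0 ≤ capS d E :=
  Finset.sum_nonneg fun i _ => capa_nonneg (E.2 i)

lemma capa_confOf_le_capS [NeZero d] (hE : ∀ i j, i ≠ j → Disjoint (E.2 i) (E.2 j)) :
    capa d (confOf d E) ≤ capS d E := by
  simp only [capa_coe, capS]
  nth_rw 1 [confOf]
  rw [Finset.sum_biUnion fun i _ j _ => hE i j]
  exact Finset.sum_le_sum fun i _ => Finset.sum_le_sum fun x hx =>
    esc_le_esc_of_subset (Finset.coe_subset.2 (subset_confOf i)) hx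

lemma pHAT_nonneg [NeZero d] (U : Conf d) (x y : Pt d) : 0 ≤ pHAT d U x y :=
  mul_nonneg (div_nonneg esc_nonneg (capa_nonneg U)) (transP_nonneg _ _ _)

lemma qIHAT_nonneg [NeZero d] (i : Fin E.1) (x y : Pt d) : 0 ≤ qIHAT d E i x y :=
  mul_nonneg (div_nonneg esc_nonneg (capS_nonneg E)) (transP_nonneg _ _ _)

lemma one_sub_mul_harmS_le_harm [NeZero d] (hE : ∀ i j, i ≠ j → Disjoint (E.2 i) (E.2 j))
    {i : Fin E.1} {x : Pt d} (hx : x ∈ E.2 i) {e η : ℝ} (he : 0 < e) (hesc : e ≤ esc d (E.2 i) x)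
    (hη : 0 ≤ η) (hxV : hitProb (others d E.2 i : Set (Pt d)) Set.univ x ≤ η) :
    (1 - η / e) * harmS d E i x ≤ harm d (confOf d E) x := by
  rw [← add_zero (η / e), harmS, harm]
  refine one_sub_add_mul_div_le_div esc_nonneg (capS_nonneg E) esc_nonneg ?_ (by positivity)
    le_rfl ?_ (by simpa using capa_confOf_le_capS hE)
  · rw [capa_coe]
    exact Finset.single_le_sum (f := esc d (confOf d E)) (fun _ _ => esc_nonneg)
      (subset_confOf i hx)
  · have hunion := esc_sub_le_esc_union (V := (others d E.2 i : Set (Pt d)))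
      (Finset.mem_coe.2 hx)
    rw [← coe_confOf_eq_union] at hunion
    have : η ≤ η / e * esc d (E.2 i) x := by
      rw [div_mul_eq_mul_div, le_div_iff₀ he]
      gcongr
    linarith

lemma one_sub_mul_qIHAT_le_pHAT [NeZero d] (hE : ∀ i j, i ≠ j → Disjoint (E.2 i) (E.2 j))
    {i : Fin E.1} {x y : Pt d} (hx : x ∈ E.2 i) {e η κ : ℝ} (he : 0 < e)
    (hesc : e ≤ esc d (E.2 i) x) (hη : 0 ≤ η)
    (hxV : hitProb (others d E.2 i : Set (Pt d)) Set.univ x ≤ η)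
    (hVW : ∀ v ∈ others d E.2 i, hitProb ((E.2 i : Set (Pt d)) \ {x}) {y} v ≤ η) (hκ : 0 < κ)
    (hxW : κ ≤ hitProb ((E.2 i : Set (Pt d)) \ {x}) {y} x) :
    (1 - (η / e + (η ^ 2 / κ + η / κ))) * qIHAT d E i x y ≤ pHAT d (confOf d E) x y := by
  refine one_sub_add_mul_mul_le_mul (div_nonneg esc_nonneg (capS_nonneg E)) (transP_nonneg _ _ _)
    (div_nonneg esc_nonneg (capa_nonneg _)) (transP_nonneg _ _ _) (by positivity) (by positivity)
    (one_sub_mul_harmS_le_harm hE hx he hesc hη hxV) ?_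
  rw [coe_confOf_diff_singleton hE hx]
  exact one_sub_mul_transP_le_transP_union hη hxV hVW hκ hxW

lemma setDist_nonneg (A B : Finset (Pt d)) : 0 ≤ setDist d A B :=
  Real.sInf_nonneg (by rintro _ ⟨x, -, y, -, rfl⟩; exact Real.sqrt_nonneg _)

lemma diam0_nonneg (A : Finset (Pt d)) : 0 ≤ diam0 d A :=
  Real.sSup_nonneg (by rintro _ ⟨x, -, y, -, rfl⟩; exact Real.sqrt_nonneg _)

lemma dist0_sq (x y : Pt d) : dist0 d x y ^ 2 = sqNorm (x - y) := by
  rw [dist0, Real.sq_sqrt (Finset.sum_nonneg fun _ _ => sq_nonneg _)]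
  simp [sqNorm]

lemma setDist_sq_le_sqNorm_sub {A B : Finset (Pt d)} {x y : Pt d} (hx : x ∈ A) (hy : y ∈ B) :
    setDist d A B ^ 2 ≤ sqNorm (x - y) := by
  rw [← dist0_sq]
  refine pow_le_pow_left₀ (setDist_nonneg A B) ?_ 2
  refine csInf_le ⟨0, ?_⟩ ⟨x, hx, y, hy, rfl⟩
  rintro _ ⟨u, -, v, -, rfl⟩
  exact Real.sqrt_nonneg _

lemma sqNorm_sub_le_diam0_sq {A : Finset (Pt d)} {x y : Pt d} (hx : x ∈ A) (hy : y ∈ A) :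
    sqNorm (x - y) ≤ diam0 d A ^ 2 := by
  rw [← dist0_sq]
  refine pow_le_pow_left₀ (Real.sqrt_nonneg _) ?_ 2
  refine le_csSup ?_ ⟨x, hx, y, hy, rfl⟩
  refine (((A ×ˢ A).finite_toSet.image fun p => dist0 d p.1 p.2).subset ?_).bddAbove
  rintro _ ⟨u, hu, v, hv, rfl⟩
  exact ⟨(u, v), by simp [hu, hv], rfl⟩

lemma tsum_tsum_eq_sum_sum {α β : Type*} {f : α → β → ℝ} {s : Finset α} {t : Finset β}
    (hf : ∀ x y, f x y ≠ 0 → x ∈ s ∧ y ∈ t) : ∑' x, ∑' y, f x y = ∑ x ∈ s, ∑ y ∈ t, f x y := by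
  have hinner (x) : ∑' y, f x y = ∑ y ∈ t, f x y :=
    tsum_eq_sum fun y hy => by_contra fun h => hy (hf x y h).2
  simp only [hinner]
  exact tsum_eq_sum fun x hx => Finset.sum_eq_zero fun y _ => by_contra fun h => hx (hf x y h).1

lemma mem_confOf_updC (i : Fin E.1) (x y : Pt d) : y ∈ confOf d (updC d E i x y) :=
  subset_confOf (E := updC d E i x y) i (by simp [updC])

lemma mul_ihatProb_le_liftProb {E₀ E₁ : ClusteringS d} {κ : ℝ}
    (hE : ∀ i j, i ≠ j → Disjoint (E₀.2 i) (E₀.2 j))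
    (h : ∀ i x y, x ∈ E₀.2 i → κ * qIHAT d E₀ i x y ≤ pHAT d (confOf d E₀) x y) :
    κ * ihatProb d E₀ E₁ ≤ liftProb d E₀ E₁ := by
  have hmem {i x y} (hi : x ∈ E₀.2 i ∧ E₁ = updC d E₀ i x y) : x ∈ confOf d E₀ ∧ y ∈ confOf d E₁ :=
    ⟨subset_confOf i hi.1, hi.2 ▸ mem_confOf_updC i x y⟩
  have hihat := tsum_tsum_eq_sum_sum (s := confOf d E₀) (t := confOf d E₁)
    (f := fun x y => ∑ i, if x ∈ E₀.2 i ∧ E₁ = updC d E₀ i x y then qIHAT d E₀ i x y else 0)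
    fun x y hne => by
      obtain ⟨i, -, hi⟩ := Finset.exists_ne_zero_of_sum_ne_zero hne
      exact hmem (ite_ne_right_iff.1 hi).1
  have hlift := tsum_tsum_eq_sum_sum (s := confOf d E₀) (t := confOf d E₁)
    (f := fun x y => if ∃ i, x ∈ E₀.2 i ∧ E₁ = updC d E₀ i x y then pHAT d (confOf d E₀) x y else 0)
    fun x y hne => by
      obtain ⟨i, hi⟩ := (ite_ne_right_iff.1 hne).1
      exact hmem hi
  rw [ihatProb, liftProb, hihat, hlift, Finset.mul_sum]
  refine Finset.sum_le_sum fun x _ => ?_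
  rw [Finset.mul_sum]
  refine Finset.sum_le_sum fun y _ => ?_
  split_ifs with hex
  · obtain ⟨i, hi⟩ := hex
    rw [Finset.sum_eq_single_of_mem i (Finset.mem_univ i) fun j _ hji => if_neg fun hj =>
      Finset.disjoint_left.1 (hE j i hji) hj.1 hi.1, if_pos hi]
    exact h i x y hi.1
  · rw [Finset.sum_eq_zero fun i _ => if_neg fun hi => hex ⟨i, hi⟩, mul_zero]

end Clusterings

section PolynomialError

lemma error_le_mul_rpow {D e c r d δ : ℝ} (hD : 0 < D) (he : 0 < e) (hc : 0 < c) (hd : 2 ≤ d)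
    (hδ : 0 < δ) (hr : 1 ≤ r) :
    D * r ^ (2 - d) / e +
        ((D * r ^ (2 - d)) ^ 2 / (c * r ^ (-δ)) + D * r ^ (2 - d) / (c * r ^ (-δ)))
      ≤ (D / e + (D ^ 2 / c + D / c)) * r ^ (2 + δ - d) := by
  have hr0 : 0 < r := zero_lt_one.trans_le hr
  set ρ := r ^ (2 - d)
  have hρ0 : 0 ≤ ρ := Real.rpow_nonneg hr0.le _
  have hρ1 : ρ ≤ 1 := Real.rpow_le_one_of_one_le_of_nonpos hr (by linarith)
  have hrδ : 1 ≤ r ^ δ := Real.one_le_rpow hr hδ.le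
  calc D * ρ / e + ((D * ρ) ^ 2 / (c * r ^ (-δ)) + D * ρ / (c * r ^ (-δ)))
      = D / e * ρ * 1 + (D ^ 2 / c * (ρ * ρ) * r ^ δ + D / c * ρ * r ^ δ) := by
        rw [Real.rpow_neg hr0.le]
        field_simp
    _ ≤ D / e * ρ * r ^ δ + (D ^ 2 / c * (ρ * 1) * r ^ δ + D / c * ρ * r ^ δ) := by gcongr
    _ = (D / e + (D ^ 2 / c + D / c)) * (ρ * r ^ δ) := by ring
    _ = (D / e + (D ^ 2 / c + D / c)) * r ^ (2 + δ - d) := by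
        rw [← Real.rpow_add hr0, sub_add_eq_add_sub]

end PolynomialError

theorem exists_one_sub_mul_qIHAT_le_pHAT {d : ℕ} (hd : 3 ≤ d) (n : ℕ) (b : ℝ) {δ : ℝ} (hδ : 0 < δ) :
    ∃ c > 0, ∀ (E : ClusteringS d) (i : Fin E.1) (x y : Pt d), IsClusteringConf d n E →
      (E.2 i).card ≤ 2 * d → 1 ≤ setDist d (E.2 i) (others d E.2 i) →
      diam0 d (E.2 i) ≤ b * Real.log (setDist d (E.2 i) (others d E.2 i)) → x ∈ E.2 i →
        (1 - c * setDist d (E.2 i) (others d E.2 i) ^ (2 + δ - d : ℝ)) * qIHAT d E i x y ≤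
          pHAT d (confOf d E) x y := by
  have : NeZero d := ⟨by lia⟩
  obtain ⟨D, hD, hfar⟩ := exists_hitProb_le_mul_rpow hd n
  obtain ⟨e, he, hesc⟩ := exists_pos_le_esc hd
  obtain ⟨c, hc, hlower⟩ := exists_rpow_le_hitProb hd hδ b
  refine ⟨D / e + (D ^ 2 / c + D / c), by positivity,
    fun E i x y ⟨_, hE, hn⟩ hcard hr hdiam hx => ?_⟩
  set A := E.2 i
  set V := others d E.2 i
  set r := setDist d A V
  have hr0 : 0 < r := zero_lt_one.trans_le hr
  rcases eq_or_ne (hitProb ((A : Set (Pt d)) \ {x}) {y} x) 0 with hzero | hne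
  · rw [qIHAT, transP_eq, hzero, zero_div, mul_zero, mul_zero]
    exact pHAT_nonneg _ _ _
  rw [← Finset.coe_erase] at hne
  have hxW := hlower (A.erase x) x y (by have := Finset.card_erase_lt_of_mem hx; lia)
    (Finset.notMem_erase x A) r hr (fun w hw => ?_) hne
  · refine (mul_le_mul_of_nonneg_right ?_ (qIHAT_nonneg i x y)).trans
      (one_sub_mul_qIHAT_le_pHAT (κ := c * r ^ (-δ)) hE hx he (hesc A x hx hcard)
        (η := D * r ^ (2 - d : ℝ)) (by positivity)
        (hfar V (hn ▸ Finset.card_le_card (others_subset_confOf i)) r hr0 x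
          (fun v hv => setDist_sq_le_sqNorm_sub hx hv) _)
        (fun v hv => ?_) (by positivity) (by rwa [← Finset.coe_erase]))
    · exact sub_le_sub_left (error_le_mul_rpow hD he hc (by norm_cast; lia) hδ hr) 1
    · rw [← Finset.coe_erase]
      refine hfar _ (hn ▸ Finset.card_le_card ((A.erase_subset x).trans (subset_confOf i))) r hr0 v
        (fun w hw => ?_) _
      rw [sqNorm_sub_comm]
      exact setDist_sq_le_sqNorm_sub (Finset.mem_of_mem_erase hw) hv
  · exact (sqNorm_sub_le_diam0_sq hx (Finset.mem_of_mem_erase hw)).trans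
      (pow_le_pow_left₀ (diam0_nonneg A) hdiam 2)

theorem p_to_q_general (d n : ℕ) (hd : 3 ≤ d) (b δ : ℝ) (hδ : 0 < δ) (hδd : δ ≤ d - 2) :
    ∃ c : ℝ, 0 < c ∧ ∀ a : ℝ, 1 < a → ∀ E0 E1 : ClusteringS d, IsClusteringConf d n E0 →
      (∀ i, (E0.2 i).card ∈ Set.Icc 2 (2 * d)) → a ≤ sep d E0.2 →
      (∀ i, diam0 d (E0.2 i) ≤ b * Real.log (setDist d (E0.2 i) (others d E0.2 i))) →
        (1 - c * a ^ (2 + δ - d)) * ihatProb d E0 E1 ≤ liftProb d E0 E1 := by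
  have : NeZero d := ⟨by lia⟩
  obtain ⟨c, hc, hbound⟩ := exists_one_sub_mul_qIHAT_le_pHAT hd n b hδ
  refine ⟨c, hc, fun a ha E0 E1 hconf hcard hsep hdiam =>
    mul_ihatProb_le_liftProb hconf.2.1 fun i x y hx => ?_⟩
  have har : a ≤ setDist d (E0.2 i) (others d E0.2 i) :=
    hsep.trans (ciInf_le (Set.finite_range _).bddBelow i)
  refine le_trans (mul_le_mul_of_nonneg_right (sub_le_sub_left ?_ 1) (qIHAT_nonneg i x y))
    (hbound E0 i x y hconf (hcard i).2 (ha.le.trans har) (hdiam i) hx)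
  gcongr c * ?_
  exact Real.rpow_le_rpow_of_nonpos (by linarith) har (by linarith)

/-- **Approximation of transition probabilities.** For `(a,b)` separated DOT clusterings
`E0, E1` of `n`-element configurations in `ℤ^d`, `d ≥ 5`, `n ≥ 4`, there is
`c = c(b,d,n) > 0` such that for `a ≥ e^{max{100b, 10d²}}`,
`P_{E0}(C_1 = E1) ≥ (1 − c a^{2.1−d}) Q_{E0}(D_1 = E1)`. -/
theorem p_to_q (d n : ℕ) (hd : 5 ≤ d) (hn : 4 ≤ n) (b : ℝ) (hb : 1 < b) :
    ∃ c : ℝ, 0 < c ∧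
      ∀ a : ℝ, 1 < a → Real.exp (max (100 * b) (10 * (d : ℝ) ^ 2)) ≤ a →
        ∀ E0 E1 : ClusteringS d,
          IsClusteringConf d n E0 → IsDOT d E0.2 a b →
          IsClusteringConf d n E1 → IsDOT d E1.2 a b →
            (1 - c * a ^ ((2.1 : ℝ) - (d : ℝ))) * ihatProb d E0 E1 ≤ liftProb d E0 E1 := by
  have hd' : (5 : ℝ) ≤ d := mod_cast hd
  obtain ⟨c, hc, h⟩ := p_to_q_general d n (by lia) b 0.1 (by norm_num) (by linarith)
  refine ⟨c, hc, fun a ha _ E0 E1 hE0 ⟨hcard, hsep, hdiam⟩ _ _ => ?_⟩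
  have hexp : (2.1 : ℝ) - d = 2 + 0.1 - d := by norm_num
  rw [hexp]
  exact h a ha E0 E1 hE0 (fun i => by rcases hcard i with h | h <;> simp [h] <;> lia) hsep hdiam

end HATFormal
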